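/- arXiv:1811.10913 — 4 statements merged into one kernel-verified Lean document; each statement's English description precedes it below -/
import Mathlib

section
/- The 1-form ω⁰ := z₁* dz₁ + z₂* dz₂ ∈ Ω¹(A) is ℤ²-homogeneous of degree (0,0) (hence O(U(1))- and O(T²)-coinvariant) and satisfies v(ω⁰) = 1, so ω⁰ ∈ Con(A,δ); moreover Con(A,δ) = {ω⁰ + α : α ∈ B dB}, where B dB := span{b db' : b, b' ∈ B} ⊆ Ω¹(A) is isomorphic, as a B-module with derivation, to Ω¹_{B/ℂ}. Analogously, ω⁰_θ := z₁* d_θ z₁ + z₂* d_θ z₂ ∈ Ω¹(A_θ) is ℤ²-homogeneous of degree (0,0), satisfies v_θ(ω⁰_θ) = 1, and Con(A_θ,δ) = {ω⁰_θ + α : α ∈ B d_θ B}. -/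
/-!
For homogeneous `a`, `a'` with `a'` of total degree `n` and `a` of total degree `-n`, one has
`a da' ≡ n a a' ω⁰` modulo `B dB`: this is trivial for `n = 0`, and the relation
`z₁* z₁ + z₂* z₂ = 1` together with the Leibniz rule moves `n` up or down by one
(`vertical_reduction`). Summing up, a `1`-form `ω` of total degree `0` satisfies
`ω ≡ v(ω) ω⁰` modulo `B dB`, so `v(ω) = 1` forces `ω - ω⁰ ∈ B dB` (`connection_sub_mem`). The
converse holds because `v` vanishes on `B dB`.

The deformed case reduces to the same computation. The rescaling
`ψ (a ⊗ a') = e^{πiθ(q₁p₂ - q₂p₁)} a ⊗ a'` of `A ⊗ A`, for `a`, `a'` of degrees `p`, `q`, carries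
the undeformed multiplication, vertical lift, `ω⁰` and Leibniz relators to the deformed ones
(`leibniz_mem`). Hence one lemma, `star_connections`, covers both fibrations, the classical one
being its case `θ = 0`.

That `Ω¹_{B/ℂ} → Ω¹(A)` is injective is shown by a left inverse. The projector `p_ij = z_i* z_j`
has entries in `B`, and these generate `B`. By the universal property of `A` there is a derivation
`∇ : A → A ⊗_B Ω¹_{B/ℂ}` with `∇ z_i = ∑_j z_j ⊗ d p_ji` and `∇ z_i* = ∑_j z_j* ⊗ d p_ij`; the
defining relation is respected since `p² = p` and `tr p = 1` give `tr (p dp) = 0`. Differentiating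
`p² = p` shows that `∇` restricts to `b ↦ 1 ⊗ db` on `B` (`exists_horizontal_derivation`).
Composing the induced map `Ω¹(A) → A ⊗_B Ω¹_{B/ℂ}` with the projection of `A` onto its
total-degree-`0` part gives the left inverse.
-/

set_option synthInstance.maxHeartbeats 1000000
set_option maxHeartbeats 1000000

open scoped TensorProduct
noncomputable section

/-- The total-degree-`n` component of a `ℤ²`-graded module. -/
def totalDeg {A : Type} [AddCommMonoid A] [Module ℂ A]
    (𝒜 : ℤ × ℤ → Submodule ℂ A) (n : ℤ) : Submodule ℂ A :=
  ⨆ (p : ℤ × ℤ) (_ : p.1 + p.2 = n), 𝒜 p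

/-- The phase factor `e^{πiθ(m₁m₂' − m₂m₁')}`. -/
def phase (θ : ℝ) (p q : ℤ × ℤ) : ℂ :=
  Complex.exp (Complex.I * ((Real.pi * θ : ℝ) : ℂ) * ((p.1 * q.2 - p.2 * q.1 : ℤ) : ℂ))

/-- The cotriangular structure phase `R_θ(t_u ⊗ t_w) = e^{−2πiθ(u₁w₂ − u₂w₁)}`. -/
def rphase (θ : ℝ) (u w : ℤ × ℤ) : ℂ :=
  Complex.exp (-(Complex.I * ((2 * Real.pi * θ : ℝ) : ℂ) * ((u.1 * w.2 - u.2 * w.1 : ℤ) : ℂ)))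

/-- The `ℤ²`-degree-`p` component of `A ⊗ A`. -/
def tensorDeg {A : Type} [CommRing A] [Algebra ℂ A]
    (𝒜 : ℤ × ℤ → Submodule ℂ A) (p : ℤ × ℤ) : Submodule ℂ (A ⊗[ℂ] A) :=
  Submodule.span ℂ
    {x : A ⊗[ℂ] A | ∃ (q r : ℤ × ℤ), ∃ a ∈ 𝒜 q, ∃ a' ∈ 𝒜 r, q + r = p ∧ x = a ⊗ₜ[ℂ] a'}

/-- The total-degree-`n` part of `A ⊗ A`. -/
def tensorTotalDeg {A : Type} [CommRing A] [Algebra ℂ A]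
    (𝒜 : ℤ × ℤ → Submodule ℂ A) (n : ℤ) : Submodule ℂ (A ⊗[ℂ] A) :=
  ⨆ (p : ℤ × ℤ) (_ : p.1 + p.2 = n), tensorDeg 𝒜 p

/-! ### Degreewise rescalings and induction on degrees -/

/-- The linear operator acting on the degree-`p` component as the scalar `f p`. -/
lemma exists_multiplier {A : Type} [CommRing A] [Algebra ℂ A]
    (𝒜 : ℤ × ℤ → Submodule ℂ A) [GradedAlgebra 𝒜] (f : ℤ × ℤ → ℂ) :
    ∃ T : A →ₗ[ℂ] A, ∀ p, ∀ a ∈ 𝒜 p, T a = f p • a := by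
  refine ⟨(DirectSum.toModule ℂ (ℤ × ℤ) A (fun p => f p • (𝒜 p).subtype)) ∘ₗ
    (DirectSum.decomposeLinearEquiv 𝒜).toLinearMap, fun p a ha => ?_⟩
  have h : DirectSum.decompose 𝒜 a = DirectSum.lof ℂ (ℤ × ℤ) (fun p => 𝒜 p) p ⟨a, ha⟩ :=
    DirectSum.decompose_of_mem 𝒜 ha
  simp [DirectSum.decomposeLinearEquiv_apply, h, -DirectSum.decomposeLinearEquiv_apply_coe]

/-- The linear operator on `A ⊗ A` acting as the scalar `f p q` on tensors of bidegree `(p, q)`. -/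
lemma exists_tensor_multiplier {A : Type} [CommRing A] [Algebra ℂ A]
    (𝒜 : ℤ × ℤ → Submodule ℂ A) [GradedAlgebra 𝒜] (f : ℤ × ℤ → ℤ × ℤ → ℂ) :
    ∃ T : A ⊗[ℂ] A →ₗ[ℂ] A ⊗[ℂ] A, ∀ p q, ∀ a ∈ 𝒜 p, ∀ a' ∈ 𝒜 q,
      T (a ⊗ₜ[ℂ] a') = f p q • (a ⊗ₜ[ℂ] a') := by
  choose T hT using fun p => exists_multiplier 𝒜 (f p)
  refine ⟨TensorProduct.lift ((DirectSum.toModule ℂ (ℤ × ℤ) (A →ₗ[ℂ] A ⊗[ℂ] A)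
    (fun p => ((TensorProduct.mk ℂ A A).compl₂ (T p)) ∘ₗ (𝒜 p).subtype)) ∘ₗ
    (DirectSum.decomposeLinearEquiv 𝒜).toLinearMap), fun p q a ha a' ha' => ?_⟩
  have h : DirectSum.decompose 𝒜 a = DirectSum.lof ℂ (ℤ × ℤ) (fun p => 𝒜 p) p ⟨a, ha⟩ :=
    DirectSum.decompose_of_mem 𝒜 ha
  simp [DirectSum.decomposeLinearEquiv_apply, h, hT p q a' ha']

lemma homogeneous_induction {A : Type} [CommRing A] [Algebra ℂ A]
    (𝒜 : ℤ × ℤ → Submodule ℂ A) [GradedAlgebra 𝒜] {P : A → Prop}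
    (hom : ∀ p, ∀ a ∈ 𝒜 p, P a) (add : ∀ a b, P a → P b → P (a + b)) (a : A) : P a :=
  DirectSum.Decomposition.inductionOn 𝒜 (hom 0 0 (Submodule.zero_mem _))
    (fun {i} m => hom i m m.2) add a

/-! ### The phase bicharacter -/

section Phase
variable (θ : ℝ)

lemma phase_add_left (p q r : ℤ × ℤ) : phase θ (p + q) r = phase θ p r * phase θ q r := by
  unfold phase; rw [← Complex.exp_add]; congr 1; push_cast [Prod.fst_add, Prod.snd_add]; ring

lemma phase_add_right (p q r : ℤ × ℤ) : phase θ p (q + r) = phase θ p q * phase θ p r := by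
  unfold phase; rw [← Complex.exp_add]; congr 1; push_cast [Prod.fst_add, Prod.snd_add]; ring

lemma phase_mul_swap (p q : ℤ × ℤ) : phase θ p q * phase θ q p = 1 := by
  unfold phase; rw [← Complex.exp_add, ← Complex.exp_zero]; congr 1; push_cast; ring

lemma phase_zero_left (p : ℤ × ℤ) : phase θ 0 p = 1 := by simp [phase]

lemma phase_zero_right (p : ℤ × ℤ) : phase θ p 0 = 1 := by simp [phase]

lemma rphase_eq (u w : ℤ × ℤ) : rphase θ u w = phase θ w u * phase θ w u := by
  unfold phase rphase; rw [← Complex.exp_add]; congr 1; push_cast; ring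

end Phase

/-! ### Total degrees -/

lemma mem_totalDeg {A : Type} [AddCommMonoid A] [Module ℂ A]
    (𝒜 : ℤ × ℤ → Submodule ℂ A) {n : ℤ} {p : ℤ × ℤ} (hp : p.1 + p.2 = n) {a : A}
    (ha : a ∈ 𝒜 p) : a ∈ totalDeg 𝒜 n :=
  (le_iSup₂_of_le (f := fun (p : ℤ × ℤ) (_ : p.1 + p.2 = n) => 𝒜 p) p hp le_rfl) ha

lemma totalDeg_induction {A : Type} [AddCommMonoid A] [Module ℂ A]
    (𝒜 : ℤ × ℤ → Submodule ℂ A) {n : ℤ} {P : A → Prop}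
    (hom : ∀ p : ℤ × ℤ, p.1 + p.2 = n → ∀ a ∈ 𝒜 p, P a)
    (zero : P 0) (add : ∀ a b, P a → P b → P (a + b)) {a : A} (ha : a ∈ totalDeg 𝒜 n) : P a := by
  unfold totalDeg at ha
  induction ha using Submodule.iSup_induction' with
  | mem p a ha =>
    by_cases hp : p.1 + p.2 = n
    · simp only [hp, iSup_pos] at ha; exact hom p hp a ha
    · simp [hp] at ha
      rw [ha]; exact zero
  | zero => exact zero
  | add a b _ _ h1 h2 => exact add a b h1 h2

lemma tensorTotalDeg_le {A : Type} [CommRing A] [Algebra ℂ A]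
    (𝒜 : ℤ × ℤ → Submodule ℂ A) {n : ℤ} {N : Submodule ℂ (A ⊗[ℂ] A)}
    (h : ∀ q r : ℤ × ℤ, (q.1 + q.2) + (r.1 + r.2) = n → ∀ a ∈ 𝒜 q, ∀ a' ∈ 𝒜 r,
      a ⊗ₜ[ℂ] a' ∈ N) : tensorTotalDeg 𝒜 n ≤ N := by
  refine iSup₂_le fun p hp => Submodule.span_le.2 ?_
  rintro _ ⟨q, r, a, ha, a', ha', hqr, rfl⟩
  refine h q r ?_ a ha a' ha'
  rw [← hp, ← hqr]; simp only [Prod.fst_add, Prod.snd_add]; ring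

lemma tmul_mem_tensorTotalDeg {A : Type} [CommRing A] [Algebra ℂ A]
    (𝒜 : ℤ × ℤ → Submodule ℂ A) {n : ℤ} {q r : ℤ × ℤ} (h : (q.1 + q.2) + (r.1 + r.2) = n)
    {a a' : A} (ha : a ∈ 𝒜 q) (ha' : a' ∈ 𝒜 r) : a ⊗ₜ[ℂ] a' ∈ tensorTotalDeg 𝒜 n := by
  refine (le_iSup₂_of_le (f := fun (p : ℤ × ℤ) (_ : p.1 + p.2 = n) => tensorDeg 𝒜 p) (q + r)
    ?_ le_rfl) (Submodule.subset_span ⟨q, r, a, ha, a', ha', rfl, rfl⟩)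
  simp only [Prod.fst_add, Prod.snd_add]; rw [← h]; ring

/-! ### Reduction of a `1`-form to its vertical part -/

/-- For `a'` of total degree `n` and `a` of total degree `-n`, `a da' ≡ n a a' ω⁰` modulo any
subspace `N` of `A ⊗ A` containing the Leibniz relators and the representatives of `B dB`. The
form `c da` is represented by `c ⊗ a - c a ⊗ 1`. The step from `n` to `n + 1` writes
`a' = a' z₁* z₁ + a' z₂* z₂`; the step from `-n` to `-n - 1` writes `a' = a' z₁ z₁* + a' z₂ z₂*`
and uses `∑ z_i dz_i* = -ω⁰`. -/
lemma vertical_reduction {A : Type} [CommRing A] [Algebra ℂ A]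
    (𝒜 : ℤ × ℤ → Submodule ℂ A) [GradedAlgebra 𝒜] {z1 z2 z1s z2s : A}
    (hz1 : z1 ∈ 𝒜 (1, 0)) (hz2 : z2 ∈ 𝒜 (0, 1))
    (hz1s : z1s ∈ 𝒜 (-1, 0)) (hz2s : z2s ∈ 𝒜 (0, -1))
    (hrel : z1s * z1 + z2s * z2 = 1) (N : Submodule ℂ (A ⊗[ℂ] A))
    (hleib : ∀ c a a' : A, c ⊗ₜ[ℂ] (a * a') - (c * a) ⊗ₜ[ℂ] a' - (c * a') ⊗ₜ[ℂ] a
      + (c * a * a') ⊗ₜ[ℂ] (1 : A) ∈ N)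
    (hB : ∀ b ∈ totalDeg 𝒜 0, ∀ b' ∈ totalDeg 𝒜 0,
      b ⊗ₜ[ℂ] b' - (b * b') ⊗ₜ[ℂ] (1 : A) ∈ N) (n : ℤ) :
    ∀ (p q : ℤ × ℤ), q.1 + q.2 = n → p.1 + p.2 = -n → ∀ a ∈ 𝒜 p, ∀ a' ∈ 𝒜 q,
      a ⊗ₜ[ℂ] a' - (a * a') ⊗ₜ[ℂ] (1 : A)
        - (n : ℂ) • ((a * a' * z1s) ⊗ₜ[ℂ] z1 + (a * a' * z2s) ⊗ₜ[ℂ] z2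
          - (a * a') ⊗ₜ[ℂ] (1 : A)) ∈ N := by
  induction n using Int.induction_on with
  | zero =>
    intro p q hq hp a ha a' ha'
    simpa using hB a (mem_totalDeg 𝒜 (by simpa using hp) ha) a' (mem_totalDeg 𝒜 hq ha')
  | succ n ih =>
    intro p q hq hp a ha a' ha'
    have l1 := hleib a (a' * z1s) z1
    have l2 := hleib a (a' * z2s) z2
    have i1 := ih (p + (1, 0)) (q + (-1, 0)) (by simp; linarith) (by simp; linarith)
      (a * z1) (SetLike.mul_mem_graded ha hz1) (a' * z1s) (SetLike.mul_mem_graded ha' hz1s)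
    have i2 := ih (p + (0, 1)) (q + (0, -1)) (by simp; linarith) (by simp; linarith)
      (a * z2) (SetLike.mul_mem_graded ha hz2) (a' * z2s) (SetLike.mul_mem_graded ha' hz2s)
    have e1 : a' = a' * z1s * z1 + a' * z2s * z2 := by linear_combination (-a') * hrel
    have e2 : a * a' = a * z1 * (a' * z1s) + a * z2 * (a' * z2s) := by
      linear_combination (-a * a') * hrel
    have e3 : ∀ c : A, a * a' * c = a * z1 * (a' * z1s) * c + a * z2 * (a' * z2s) * c := by
      intro c; linear_combination (-a * a' * c) * hrel
    have key := N.add_mem (N.add_mem l1 l2) (N.add_mem i1 i2)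
    convert key using 1
    rw [show a * (a' * z1s) = a * a' * z1s by ring, show a * (a' * z2s) = a * a' * z2s by ring]
    rw [show a * a' * z1s * z1 = a * z1 * (a' * z1s) by ring,
      show a * a' * z2s * z2 = a * z2 * (a' * z2s) by ring]
    have t1 : a ⊗ₜ[ℂ] a' = a ⊗ₜ[ℂ] (a' * z1s * z1) + a ⊗ₜ[ℂ] (a' * z2s * z2) := by
      rw [← TensorProduct.tmul_add, ← e1]
    have t2 : ∀ d : A, (a * a') ⊗ₜ[ℂ] d
        = (a * z1 * (a' * z1s)) ⊗ₜ[ℂ] d + (a * z2 * (a' * z2s)) ⊗ₜ[ℂ] d := by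
      intro d; rw [← TensorProduct.add_tmul, ← e2]
    have t3 : ∀ c d : A, (a * a' * c) ⊗ₜ[ℂ] d
        = (a * z1 * (a' * z1s) * c) ⊗ₜ[ℂ] d + (a * z2 * (a' * z2s) * c) ⊗ₜ[ℂ] d := by
      intro c d; rw [← TensorProduct.add_tmul, ← e3]
    rw [t1, t2, t3, t3]
    push_cast
    module
  | pred n ih =>
    intro p q hq hp a ha a' ha'
    have l1 := hleib a (a' * z1) z1s
    have l2 := hleib a (a' * z2) z2s
    have l3 := hleib (a * a') z1s z1
    have l4 := hleib (a * a') z2s z2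
    have i1 := ih (p + (-1, 0)) (q + (1, 0)) (by simp; linarith) (by simp; linarith)
      (a * z1s) (SetLike.mul_mem_graded ha hz1s) (a' * z1) (SetLike.mul_mem_graded ha' hz1)
    have i2 := ih (p + (0, -1)) (q + (0, 1)) (by simp; linarith) (by simp; linarith)
      (a * z2s) (SetLike.mul_mem_graded ha hz2s) (a' * z2) (SetLike.mul_mem_graded ha' hz2)
    have e1 : a' = a' * z1 * z1s + a' * z2 * z2s := by linear_combination (-a') * hrel
    have e2 : a * a' = a * z1s * (a' * z1) + a * z2s * (a' * z2) := by
      linear_combination (-a * a') * hrel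
    have e3 : ∀ c : A, a * a' * c = a * z1s * (a' * z1) * c + a * z2s * (a' * z2) * c := by
      intro c; linear_combination (-a * a' * c) * hrel
    have key := N.sub_mem (N.add_mem (N.add_mem l1 l2) (N.add_mem i1 i2)) (N.add_mem l3 l4)
    convert key using 1
    rw [show a * (a' * z1) = a * a' * z1 by ring, show a * (a' * z2) = a * a' * z2 by ring]
    rw [show a * a' * z1s * z1 = a * z1s * (a' * z1) by ring,
      show a * a' * z2s * z2 = a * z2s * (a' * z2) by ring]
    rw [show a * a' * z1 * z1s = a * z1s * (a' * z1) by ring,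
      show a * a' * z2 * z2s = a * z2s * (a' * z2) by ring]
    have t0 : (a * a') ⊗ₜ[ℂ] (z1s * z1) + (a * a') ⊗ₜ[ℂ] (z2s * z2)
        = (a * a') ⊗ₜ[ℂ] (1 : A) := by
      rw [← TensorProduct.tmul_add, hrel]
    have t0' := eq_sub_of_add_eq t0
    have t1 : a ⊗ₜ[ℂ] a' = a ⊗ₜ[ℂ] (a' * z1 * z1s) + a ⊗ₜ[ℂ] (a' * z2 * z2s) := by
      rw [← TensorProduct.tmul_add, ← e1]
    have t2 : ∀ d : A, (a * a') ⊗ₜ[ℂ] d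
        = (a * z1s * (a' * z1)) ⊗ₜ[ℂ] d + (a * z2s * (a' * z2)) ⊗ₜ[ℂ] d := by
      intro d; rw [← TensorProduct.add_tmul, ← e2]
    have t3 : ∀ c d : A, (a * a' * c) ⊗ₜ[ℂ] d
        = (a * z1s * (a' * z1) * c) ⊗ₜ[ℂ] d + (a * z2s * (a' * z2) * c) ⊗ₜ[ℂ] d := by
      intro c d; rw [← TensorProduct.add_tmul, ← e3]
    rw [t0', t1]
    simp only [t3]
    simp only [t2]
    push_cast
    module

/-- A representative `x` of a connection differs from that of `ω⁰` by an element of `N`: the map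
`F x = x - μ(x) ⊗ 1 - v(x) ω⁰` sends total degree `0` into `N` by `vertical_reduction`. -/
lemma connection_sub_mem {A : Type} [CommRing A] [Algebra ℂ A]
    (𝒜 : ℤ × ℤ → Submodule ℂ A) [GradedAlgebra 𝒜] {z1 z2 z1s z2s : A}
    (hz1 : z1 ∈ 𝒜 (1, 0)) (hz2 : z2 ∈ 𝒜 (0, 1))
    (hz1s : z1s ∈ 𝒜 (-1, 0)) (hz2s : z2s ∈ 𝒜 (0, -1))
    (hrel : z1s * z1 + z2s * z2 = 1) (N : Submodule ℂ (A ⊗[ℂ] A))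
    (hleib : ∀ c a a' : A, c ⊗ₜ[ℂ] (a * a') - (c * a) ⊗ₜ[ℂ] a' - (c * a') ⊗ₜ[ℂ] a
      + (c * a * a') ⊗ₜ[ℂ] (1 : A) ∈ N)
    (hB : ∀ b ∈ totalDeg 𝒜 0, ∀ b' ∈ totalDeg 𝒜 0,
      b ⊗ₜ[ℂ] b' - (b * b') ⊗ₜ[ℂ] (1 : A) ∈ N)
    (Euler : A →ₗ[ℂ] A)
    (hEuler : ∀ (p : ℤ × ℤ), ∀ a ∈ 𝒜 p, Euler a = ((p.1 + p.2 : ℤ) : ℂ) • a)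
    {x : A ⊗[ℂ] A} (hxdeg : x ∈ tensorTotalDeg 𝒜 0) (hx : LinearMap.mul' ℂ A x = 0)
    (hv : (LinearMap.mul' ℂ A).comp (TensorProduct.map LinearMap.id Euler) x = 1) :
    x - (z1s ⊗ₜ[ℂ] z1 + z2s ⊗ₜ[ℂ] z2 - 1 ⊗ₜ[ℂ] (1 : A)) ∈ N := by
  let R : A ⊗[ℂ] A →ₗ[ℂ] A ⊗[ℂ] A := (TensorProduct.mk ℂ A A).flip 1 ∘ₗ LinearMap.mul' ℂ A
  let W : A →ₗ[ℂ] A ⊗[ℂ] A :=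
    LinearMap.mulRight ℂ (z1s ⊗ₜ[ℂ] z1 + z2s ⊗ₜ[ℂ] z2 - 1 ⊗ₜ[ℂ] (1 : A)) ∘ₗ
      (TensorProduct.mk ℂ A A).flip 1
  let F : A ⊗[ℂ] A →ₗ[ℂ] A ⊗[ℂ] A := LinearMap.id - R -
    W ∘ₗ (LinearMap.mul' ℂ A).comp (TensorProduct.map LinearMap.id Euler)
  have hF : tensorTotalDeg 𝒜 0 ≤ N.comap F := by
    refine tensorTotalDeg_le 𝒜 fun q r hqr a ha a' ha' => ?_
    have h := vertical_reduction 𝒜 hz1 hz2 hz1s hz2s hrel N hleib hB (r.1 + r.2) q r rfl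
      (by linarith) a ha a' ha'
    rw [Submodule.mem_comap]
    convert h using 1
    simp [F, R, W, hEuler r a' ha', mul_add, mul_sub]
  have h := hF hxdeg
  rw [Submodule.mem_comap] at h
  have h2 : F x = x - (z1s ⊗ₜ[ℂ] z1 + z2s ⊗ₜ[ℂ] z2 - 1 ⊗ₜ[ℂ] (1 : A)) := by
    change x - R x - W ((LinearMap.mul' ℂ A).comp (TensorProduct.map LinearMap.id Euler) x) = _
    rw [hv]
    simp only [R, W, LinearMap.comp_apply, hx, map_zero, sub_zero, LinearMap.flip_apply,
      TensorProduct.mk_apply, LinearMap.mulRight_apply]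
    rw [← Algebra.TensorProduct.one_def, one_mul]
  rwa [h2] at h

/-! ### The deformed structure -/

/-- The unit of `A` is a right unit for the star product. -/
lemma starProduct_one {A : Type} [CommRing A] [Algebra ℂ A]
    (𝒜 : ℤ × ℤ → Submodule ℂ A) [GradedAlgebra 𝒜] {θ : ℝ} {stp : A →ₗ[ℂ] A →ₗ[ℂ] A}
    (hstp : ∀ (p q : ℤ × ℤ), ∀ a ∈ 𝒜 p, ∀ a' ∈ 𝒜 q, stp a a' = phase θ p q • (a * a'))
    (a : A) : stp a 1 = a := by
  refine homogeneous_induction 𝒜 (P := fun a => stp a 1 = a) (fun p a ha => ?_)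
    (fun a b h1 h2 => by simp [h1, h2]) a
  rw [hstp p 0 a ha 1 (SetLike.one_mem_graded 𝒜), phase_zero_right, one_smul, mul_one]

/-- The rescaling `ψ` carries a classical Leibniz relator into the braided square of the kernel of
the star product: for homogeneous `c`, `a`, `a'` it is a phase times the braided product of
`c ⊗ a - c ⋆ a ⊗ 1` and `1 ⊗ a' - a' ⊗ 1`. -/
lemma leibniz_mem {A : Type} [CommRing A] [Algebra ℂ A]
    (𝒜 : ℤ × ℤ → Submodule ℂ A) [GradedAlgebra 𝒜] {θ : ℝ} {stp : A →ₗ[ℂ] A →ₗ[ℂ] A}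
    (hstp : ∀ (p q : ℤ × ℤ), ∀ a ∈ 𝒜 p, ∀ a' ∈ 𝒜 q, stp a a' = phase θ p q • (a * a'))
    (bmul : A ⊗[ℂ] A →ₗ[ℂ] A ⊗[ℂ] A →ₗ[ℂ] A ⊗[ℂ] A)
    (hbmul : ∀ (p p' u u' : ℤ × ℤ), ∀ a ∈ 𝒜 p, ∀ a' ∈ 𝒜 p', ∀ c ∈ 𝒜 u, ∀ c' ∈ 𝒜 u',
      bmul (a ⊗ₜ[ℂ] a') (c ⊗ₜ[ℂ] c')
        = rphase θ u p' • ((stp a c) ⊗ₜ[ℂ] (stp a' c')))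
    {ψ : A ⊗[ℂ] A →ₗ[ℂ] A ⊗[ℂ] A}
    (hψ : ∀ p q, ∀ a ∈ 𝒜 p, ∀ a' ∈ 𝒜 q, ψ (a ⊗ₜ[ℂ] a') = phase θ q p • (a ⊗ₜ[ℂ] a'))
    {N : Submodule ℂ (A ⊗[ℂ] A)}
    (hN : ∀ x ∈ LinearMap.ker (TensorProduct.lift stp),
      ∀ y ∈ LinearMap.ker (TensorProduct.lift stp), bmul x y ∈ N) (c a a' : A) :
    ψ (c ⊗ₜ[ℂ] (a * a') - (c * a) ⊗ₜ[ℂ] a' - (c * a') ⊗ₜ[ℂ] a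
      + (c * a * a') ⊗ₜ[ℂ] (1 : A)) ∈ N := by
  have h1 : (1 : A) ∈ 𝒜 0 := SetLike.one_mem_graded 𝒜
  refine homogeneous_induction 𝒜 (P := fun c => ψ (c ⊗ₜ[ℂ] (a * a') - (c * a) ⊗ₜ[ℂ] a'
      - (c * a') ⊗ₜ[ℂ] a + (c * a * a') ⊗ₜ[ℂ] (1 : A)) ∈ N) (fun p c hc => ?_)
    (fun x y hx hy => ?_) c
  swap
  · convert N.add_mem hx hy using 1
    rw [← map_add]; congr 1; simp only [add_mul, TensorProduct.add_tmul]; abel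
  refine homogeneous_induction 𝒜 (P := fun a => ψ (c ⊗ₜ[ℂ] (a * a') - (c * a) ⊗ₜ[ℂ] a'
      - (c * a') ⊗ₜ[ℂ] a + (c * a * a') ⊗ₜ[ℂ] (1 : A)) ∈ N) (fun q a ha => ?_)
    (fun x y hx hy => ?_) a
  swap
  · convert N.add_mem hx hy using 1
    rw [← map_add]; congr 1
    simp only [add_mul, mul_add, TensorProduct.add_tmul, TensorProduct.tmul_add]; abel
  refine homogeneous_induction 𝒜 (P := fun a' => ψ (c ⊗ₜ[ℂ] (a * a') - (c * a) ⊗ₜ[ℂ] a'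
      - (c * a') ⊗ₜ[ℂ] a + (c * a * a') ⊗ₜ[ℂ] (1 : A)) ∈ N) (fun r a' ha' => ?_)
    (fun x y hx hy => ?_) a'
  swap
  · convert N.add_mem hx hy using 1
    rw [← map_add]; congr 1
    simp only [mul_add, TensorProduct.add_tmul, TensorProduct.tmul_add]; abel
  have k1 : c ⊗ₜ[ℂ] a - stp c a ⊗ₜ[ℂ] (1 : A) ∈ LinearMap.ker (TensorProduct.lift stp) := by
    simp [LinearMap.mem_ker, starProduct_one 𝒜 hstp]
  have k2 : (1 : A) ⊗ₜ[ℂ] a' - a' ⊗ₜ[ℂ] (1 : A) ∈ LinearMap.ker (TensorProduct.lift stp) := by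
    simp [LinearMap.mem_ker, starProduct_one 𝒜 hstp, hstp 0 r 1 h1 a' ha', phase_zero_left]
  have key := N.smul_mem (phase θ q p * phase θ r p * phase θ r q) (hN _ k1 _ k2)
  convert key using 1
  have hca : c * a ∈ 𝒜 (p + q) := SetLike.mul_mem_graded hc ha
  simp only [map_sub, map_add, LinearMap.sub_apply]
  rw [hψ p (q + r) c hc _ (SetLike.mul_mem_graded ha ha'), hψ (p + q) r _ hca a' ha',
    hψ (p + r) q _ (SetLike.mul_mem_graded hc ha') a ha,
    hψ (p + q + r) 0 _ (SetLike.mul_mem_graded hca ha') 1 h1]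
  rw [hstp p q c hc a ha, ← TensorProduct.smul_tmul']
  simp only [map_smul, LinearMap.smul_apply]
  rw [hbmul p q 0 r c hc a ha 1 h1 a' ha', hbmul p q r 0 c hc a ha a' ha' 1 h1,
    hbmul (p + q) 0 0 r _ hca 1 h1 1 h1 a' ha', hbmul (p + q) 0 r 0 _ hca 1 h1 a' ha' 1 h1]
  simp only [starProduct_one 𝒜 hstp, hstp q r a ha a' ha', hstp 0 r 1 h1 a' ha', one_mul,
    hstp p r c hc a' ha', hstp (p + q) r _ hca a' ha', rphase_eq, phase_zero_left,
    phase_zero_right, phase_add_left, phase_add_right, ← TensorProduct.smul_tmul',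
    TensorProduct.tmul_smul, smul_smul, smul_sub, one_smul, mul_one]
  have e1 := phase_mul_swap θ p q
  have e2 := phase_mul_swap θ p r
  have e3 := phase_mul_swap θ q r
  have f1 : phase θ q p * phase θ r p * phase θ r q * phase θ q r
      = phase θ q p * phase θ r p := by
    linear_combination (phase θ q p * phase θ r p) * e3
  have f2 : phase θ q p * phase θ r p * phase θ r q * (phase θ q r * phase θ q r * phase θ p r)
      = phase θ q p * phase θ q r := by
    linear_combination (phase θ q p * phase θ r p * phase θ q r * phase θ p r) * e3
      + (phase θ q p * phase θ q r) * e2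
  have f3 : phase θ q p * phase θ r p * phase θ r q * phase θ p q
      = phase θ r p * phase θ r q := by
    linear_combination (phase θ r p * phase θ r q) * e1
  have f4 : phase θ q p * phase θ r p * phase θ r q
      * (phase θ p q * (phase θ p r * phase θ q r)) = 1 := by
    linear_combination (phase θ r p * phase θ r q * phase θ p r * phase θ q r) * e1
      + (phase θ r q * phase θ q r) * e2 + e3
  simp only [mul_assoc] at f1 f2 f3 f4 ⊢
  simp only [f1, f2, f3, f4, one_smul]
  abel

/-- The description of the space of connections, for the star product and braided product with
parameter `θ`; `θ = 0` with the ordinary products is the classical Hopf fibration. -/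
lemma star_connections {A : Type} [CommRing A] [Algebra ℂ A]
    (𝒜 : ℤ × ℤ → Submodule ℂ A) [GradedAlgebra 𝒜] {z1 z2 z1s z2s : A}
    (hz1 : z1 ∈ 𝒜 (1, 0)) (hz2 : z2 ∈ 𝒜 (0, 1))
    (hz1s : z1s ∈ 𝒜 (-1, 0)) (hz2s : z2s ∈ 𝒜 (0, -1))
    (hrel : z1s * z1 + z2s * z2 = 1)
    (θ : ℝ) (stp : A →ₗ[ℂ] A →ₗ[ℂ] A)
    (hstp : ∀ (p q : ℤ × ℤ), ∀ a ∈ 𝒜 p, ∀ a' ∈ 𝒜 q, stp a a' = phase θ p q • (a * a'))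
    (bmul : A ⊗[ℂ] A →ₗ[ℂ] A ⊗[ℂ] A →ₗ[ℂ] A ⊗[ℂ] A)
    (hbmul : ∀ (p p' u u' : ℤ × ℤ), ∀ a ∈ 𝒜 p, ∀ a' ∈ 𝒜 p', ∀ c ∈ 𝒜 u, ∀ c' ∈ 𝒜 u',
      bmul (a ⊗ₜ[ℂ] a') (c ⊗ₜ[ℂ] c')
        = rphase θ u p' • ((stp a c) ⊗ₜ[ℂ] (stp a' c')))
    (Euler : A →ₗ[ℂ] A)
    (hEuler : ∀ (p : ℤ × ℤ), ∀ a ∈ 𝒜 p, Euler a = ((p.1 + p.2 : ℤ) : ℂ) • a)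
    (K K2 : Submodule ℂ (A ⊗[ℂ] A)) (vrep : A ⊗[ℂ] A →ₗ[ℂ] A) (ωrep : A ⊗[ℂ] A)
    (BdB : Submodule ℂ (A ⊗[ℂ] A))
    (hK : K = LinearMap.ker (TensorProduct.lift stp))
    (hK2 : K2 = Submodule.span ℂ {y : A ⊗[ℂ] A | ∃ x ∈ K, ∃ x' ∈ K, y = bmul x x'})
    (hv : vrep = (TensorProduct.lift stp).comp (TensorProduct.map LinearMap.id Euler))
    (hω : ωrep = (stp z1s 1) ⊗ₜ[ℂ] z1 - (stp z1s z1) ⊗ₜ[ℂ] (1 : A)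
        + ((stp z2s 1) ⊗ₜ[ℂ] z2 - (stp z2s z2) ⊗ₜ[ℂ] (1 : A)))
    (hBdB : BdB = Submodule.span ℂ {y : A ⊗[ℂ] A | ∃ b ∈ totalDeg 𝒜 0, ∃ b' ∈ totalDeg 𝒜 0,
        y = (stp b 1) ⊗ₜ[ℂ] b' - (stp b b') ⊗ₜ[ℂ] (1 : A)}) :
    (ωrep ∈ K ∧ ωrep ∈ tensorDeg 𝒜 (0, 0) ∧ vrep ωrep = 1) ∧
    ({w : (A ⊗[ℂ] A) ⧸ K2 | ∃ x : A ⊗[ℂ] A,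
          x ∈ K ∧ x ∈ tensorTotalDeg 𝒜 0 ∧ vrep x = 1 ∧ w = K2.mkQ x}
        = {w : (A ⊗[ℂ] A) ⧸ K2 | ∃ x ∈ BdB, w = K2.mkQ (ωrep + x)}) := by
  have h1 : (1 : A) ∈ 𝒜 0 := SetLike.one_mem_graded 𝒜
  have s1 := starProduct_one 𝒜 hstp
  have hE1 : Euler 1 = 0 := by simp [hEuler 0 1 h1]
  have sz1 : stp z1s z1 = z1s * z1 := by
    rw [hstp _ _ _ hz1s _ hz1]; simp [phase]
  have sz2 : stp z2s z2 = z2s * z2 := by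
    rw [hstp _ _ _ hz2s _ hz2]; simp [phase]
  have hω' : ωrep = z1s ⊗ₜ[ℂ] z1 + z2s ⊗ₜ[ℂ] z2 - 1 ⊗ₜ[ℂ] (1 : A) := by
    rw [hω, sz1, sz2, s1, s1, ← hrel, TensorProduct.add_tmul]; abel
  have hωK : ωrep ∈ K := by
    rw [hω, hK, LinearMap.mem_ker]; simp [s1]
  have hωdeg : ωrep ∈ tensorDeg 𝒜 (0, 0) := by
    rw [hω']
    refine sub_mem (add_mem ?_ ?_) ?_
    · exact Submodule.subset_span ⟨_, _, _, hz1s, _, hz1, by simp, rfl⟩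
    · exact Submodule.subset_span ⟨_, _, _, hz2s, _, hz2, by simp, rfl⟩
    · exact Submodule.subset_span ⟨0, 0, _, h1, _, h1, rfl, rfl⟩
  have hωdeg' : ωrep ∈ tensorTotalDeg 𝒜 0 :=
    (le_iSup₂_of_le (f := fun (p : ℤ × ℤ) (_ : p.1 + p.2 = 0) => tensorDeg 𝒜 p) (0, 0)
      (by simp) le_rfl) hωdeg
  have hωv : vrep ωrep = 1 := by
    rw [hω', hv]
    simp [hE1, hEuler _ _ hz1, hEuler _ _ hz2, sz1, sz2, hrel]
  refine ⟨⟨hωK, hωdeg, hωv⟩, ?_⟩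
  -- the phase-rescaling map intertwining the classical and the deformed structures
  obtain ⟨ψ, hψ⟩ := exists_tensor_multiplier 𝒜 (fun p q => phase θ q p)
  have tens_ext : ∀ (f g : A ⊗[ℂ] A →ₗ[ℂ] A), (∀ p q, ∀ a ∈ 𝒜 p, ∀ a' ∈ 𝒜 q,
      f (a ⊗ₜ[ℂ] a') = g (a ⊗ₜ[ℂ] a')) → f = g := by
    intro f g h
    refine TensorProduct.ext' fun a a' => ?_
    refine homogeneous_induction 𝒜 (P := fun a => f (a ⊗ₜ[ℂ] a') = g (a ⊗ₜ[ℂ] a'))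
      (fun p a ha => ?_) (fun x y hx hy => by simp [TensorProduct.add_tmul, hx, hy]) a
    exact homogeneous_induction 𝒜 (P := fun a' => f (a ⊗ₜ[ℂ] a') = g (a ⊗ₜ[ℂ] a'))
      (fun q a' ha' => h p q a ha a' ha')
      (fun x y hx hy => by simp [TensorProduct.tmul_add, hx, hy]) a'
  have hψμ : (TensorProduct.lift stp) ∘ₗ ψ = LinearMap.mul' ℂ A := by
    refine tens_ext _ _ fun p q a ha a' ha' => ?_
    simp [hψ p q a ha a' ha', hstp p q a ha a' ha', smul_smul, phase_mul_swap]
  have hψv : vrep ∘ₗ ψ = (LinearMap.mul' ℂ A).comp (TensorProduct.map LinearMap.id Euler) := by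
    refine tens_ext _ _ fun p q a ha a' ha' => ?_
    rw [hv]
    simp only [LinearMap.comp_apply, hψ p q a ha a' ha', map_smul, TensorProduct.map_tmul,
      hEuler q a' ha', LinearMap.id_apply, TensorProduct.tmul_smul, TensorProduct.lift.tmul,
      LinearMap.mul'_apply, hstp p q a ha a' ha']
    rw [smul_comm, smul_smul (phase θ q p), phase_mul_swap, one_smul]
  have hψω : ψ (z1s ⊗ₜ[ℂ] z1 + z2s ⊗ₜ[ℂ] z2 - 1 ⊗ₜ[ℂ] (1 : A)) = ωrep := by
    rw [hω', map_sub, map_add, hψ _ _ _ hz1s _ hz1, hψ _ _ _ hz2s _ hz2, hψ _ _ _ h1 _ h1]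
    simp [phase]
  have hψdeg : tensorTotalDeg 𝒜 0 ≤ (tensorTotalDeg 𝒜 0).map ψ := by
    refine tensorTotalDeg_le 𝒜 fun q r hqr a ha a' ha' => ?_
    refine ⟨phase θ q r • (a ⊗ₜ[ℂ] a'),
      Submodule.smul_mem _ _ (tmul_mem_tensorTotalDeg 𝒜 hqr ha ha'), ?_⟩
    rw [map_smul, hψ q r a ha a' ha', smul_smul, phase_mul_swap, one_smul]
  have hleib : ∀ c a a' : A, c ⊗ₜ[ℂ] (a * a') - (c * a) ⊗ₜ[ℂ] a' - (c * a') ⊗ₜ[ℂ] a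
      + (c * a * a') ⊗ₜ[ℂ] (1 : A) ∈ (K2 ⊔ BdB).comap ψ := by
    intro c a a'
    refine (le_sup_left : K2 ≤ K2 ⊔ BdB) (leibniz_mem 𝒜 hstp bmul hbmul hψ (N := K2) ?_ c a a')
    intro x hx y hy
    rw [← hK] at hx hy
    rw [hK2]
    exact Submodule.subset_span ⟨x, hx, y, hy, rfl⟩
  have hB : ∀ b ∈ totalDeg 𝒜 0, ∀ b' ∈ totalDeg 𝒜 0,
      b ⊗ₜ[ℂ] b' - (b * b') ⊗ₜ[ℂ] (1 : A) ∈ (K2 ⊔ BdB).comap ψ := by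
    intro b hb b' hb'
    refine totalDeg_induction 𝒜 (P := fun b => b ⊗ₜ[ℂ] b' - (b * b') ⊗ₜ[ℂ] (1 : A)
      ∈ (K2 ⊔ BdB).comap ψ) (fun p hp b hb => ?_) (by simp) (fun x y hx hy => ?_) hb
    swap
    · convert add_mem hx hy using 1
      simp only [add_mul, TensorProduct.add_tmul]; abel
    refine totalDeg_induction 𝒜 (P := fun b' => b ⊗ₜ[ℂ] b' - (b * b') ⊗ₜ[ℂ] (1 : A)
      ∈ (K2 ⊔ BdB).comap ψ) (fun q hq b' hb' => ?_) (by simp) (fun x y hx hy => ?_) hb'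
    swap
    · convert add_mem hx hy using 1
      simp only [mul_add, TensorProduct.tmul_add, TensorProduct.add_tmul]; abel
    refine (le_sup_right : BdB ≤ K2 ⊔ BdB) ?_
    have hmem : b ⊗ₜ[ℂ] b' - (stp b b') ⊗ₜ[ℂ] (1 : A) ∈ BdB := by
      rw [hBdB]
      exact Submodule.subset_span
        ⟨b, mem_totalDeg 𝒜 hp hb, b', mem_totalDeg 𝒜 hq hb', by rw [s1]⟩
    convert BdB.smul_mem (phase θ q p) hmem using 1
    rw [map_sub, hψ p q b hb b' hb', hψ (p + q) 0 _ (SetLike.mul_mem_graded hb hb') 1 h1,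
      phase_zero_left, hstp p q b hb b' hb', smul_sub, ← TensorProduct.smul_tmul', smul_smul,
      phase_mul_swap]
  have hBdBker : ∀ x ∈ BdB, x ∈ K ∧ x ∈ tensorTotalDeg 𝒜 0 ∧ vrep x = 0 := by
    suffices h : BdB ≤ K ⊓ tensorTotalDeg 𝒜 0 ⊓ LinearMap.ker vrep from
      fun x hx => ⟨(h hx).1.1, (h hx).1.2, (h hx).2⟩
    rw [hBdB, Submodule.span_le]
    rintro _ ⟨b, hb, b', hb', rfl⟩
    rw [s1, SetLike.mem_coe]
    refine totalDeg_induction 𝒜 (P := fun b => b ⊗ₜ[ℂ] b' - (stp b b') ⊗ₜ[ℂ] (1 : A)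
      ∈ K ⊓ tensorTotalDeg 𝒜 0 ⊓ LinearMap.ker vrep) (fun p hp b hb => ?_) (by simp)
      (fun x y hx hy => ?_) hb
    swap
    · convert add_mem hx hy using 1
      simp only [map_add, LinearMap.add_apply, TensorProduct.add_tmul]; abel
    refine totalDeg_induction 𝒜 (P := fun b' => b ⊗ₜ[ℂ] b' - (stp b b') ⊗ₜ[ℂ] (1 : A)
      ∈ K ⊓ tensorTotalDeg 𝒜 0 ⊓ LinearMap.ker vrep) (fun q hq b' hb' => ?_) (by simp)
      (fun x y hx hy => ?_) hb'
    swap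
    · convert add_mem hx hy using 1
      simp only [map_add, TensorProduct.tmul_add, TensorProduct.add_tmul]; abel
    refine ⟨⟨?_, ?_⟩, ?_⟩
    · rw [SetLike.mem_coe, hK, LinearMap.mem_ker]; simp [s1]
    · refine sub_mem (tmul_mem_tensorTotalDeg 𝒜 (by rw [hp, hq]; rfl) hb hb') ?_
      rw [hstp p q b hb b' hb', ← TensorProduct.smul_tmul']
      refine Submodule.smul_mem _ _ (tmul_mem_tensorTotalDeg 𝒜 (q := p + q) (r := 0) ?_
        (SetLike.mul_mem_graded hb hb') h1)
      simp only [Prod.fst_add, Prod.snd_add, Prod.fst_zero, Prod.snd_zero]; linarith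
    · rw [SetLike.mem_coe, LinearMap.mem_ker, hv]
      simp [hE1, hEuler q b' hb', hq]
  ext w
  constructor
  · rintro ⟨x, hxK, hxdeg, hxv, rfl⟩
    obtain ⟨x', hx'deg, rfl⟩ := hψdeg hxdeg
    have hx' : LinearMap.mul' ℂ A x' = 0 := by
      rw [← hψμ]; rw [hK] at hxK; exact hxK
    have h := connection_sub_mem 𝒜 hz1 hz2 hz1s hz2s hrel _ hleib hB Euler hEuler hx'deg hx'
      (by rw [← hψv]; exact hxv)
    rw [Submodule.mem_comap, map_sub, hψω] at h
    obtain ⟨k, hk, β, hβ, hkβ⟩ := Submodule.mem_sup.1 h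
    refine ⟨β, hβ, ?_⟩
    rw [Submodule.mkQ_apply, Submodule.mkQ_apply, Submodule.Quotient.eq]
    convert hk using 1
    rw [← sub_sub, ← hkβ, add_sub_cancel_right]
  · rintro ⟨x, hx, rfl⟩
    obtain ⟨a1, a2, a3⟩ := hBdBker x hx
    exact ⟨ωrep + x, add_mem hωK a1, add_mem hωdeg' a2, by rw [map_add, hωv, a3, add_zero], rfl⟩

/-! ### The horizontal derivation -/

/-- A derivation of `A` may be prescribed on the generators, subject to the differentiated
relation: it is the second component of an algebra map into the square-zero extension `A ⊕ M`. -/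
lemma exists_derivation {A : Type} [CommRing A] [Algebra ℂ A] {z1 z2 z1s z2s : A}
    (hrel : z1s * z1 + z2s * z2 = 1)
    (huniv : ∀ (C : Type) [CommRing C] [Algebra ℂ C] (w1 w2 w1s w2s : C),
      w1s * w1 + w2s * w2 = 1 →
      ∃! f : A →ₐ[ℂ] C, f z1 = w1 ∧ f z2 = w2 ∧ f z1s = w1s ∧ f z2s = w2s)
    (M : Type) [AddCommGroup M] [Module A M] [Module ℂ M] [IsScalarTower ℂ A M]
    (m1 m2 m1s m2s : M) (hm : z1s • m1 + z1 • m1s + (z2s • m2 + z2 • m2s) = 0) :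
    ∃ D : Derivation ℂ A M, D z1 = m1 ∧ D z2 = m2 ∧ D z1s = m1s ∧ D z2s = m2s := by
  -- the ring structure on the square-zero extension requires a right action as well
  let _ : Module Aᵐᵒᵖ M := Module.compHom M ((RingHom.id A).fromOpposite mul_comm)
  have : IsCentralScalar A M := ⟨fun _ _ => rfl⟩
  obtain ⟨f, ⟨f1, f2, f3, f4⟩, -⟩ := huniv (TrivSqZeroExt A M)
    (TrivSqZeroExt.inl z1 + TrivSqZeroExt.inr m1) (TrivSqZeroExt.inl z2 + TrivSqZeroExt.inr m2)
    (TrivSqZeroExt.inl z1s + TrivSqZeroExt.inr m1s)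
    (TrivSqZeroExt.inl z2s + TrivSqZeroExt.inr m2s)
    (by ext <;> simp [hrel, hm])
  have hfst : (TrivSqZeroExt.fstHom ℂ A M).comp f = AlgHom.id ℂ A := by
    obtain ⟨g, -, hg⟩ := huniv A z1 z2 z1s z2s hrel
    rw [hg ((TrivSqZeroExt.fstHom ℂ A M).comp f) (by simp [f1, f2, f3, f4]),
      hg (AlgHom.id ℂ A) (by simp)]
  have hfst' : ∀ a, (f a).fst = a := fun a => DFunLike.congr_fun hfst a
  refine ⟨Derivation.mk' ((TrivSqZeroExt.sndHom A M).restrictScalars ℂ ∘ₗ f.toLinearMap) ?_,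
    ?_, ?_, ?_, ?_⟩
  · intro a b
    simp [hfst']
  all_goals simp [f1, f2, f3, f4]

/-- The generators generate `A`: the universal property splits the inclusion of the subalgebra
they generate. -/
lemma adjoin_generators_eq_top {A : Type} [CommRing A] [Algebra ℂ A] {z1 z2 z1s z2s : A}
    (hrel : z1s * z1 + z2s * z2 = 1)
    (huniv : ∀ (C : Type) [CommRing C] [Algebra ℂ C] (w1 w2 w1s w2s : C),
      w1s * w1 + w2s * w2 = 1 →
      ∃! f : A →ₐ[ℂ] C, f z1 = w1 ∧ f z2 = w2 ∧ f z1s = w1s ∧ f z2s = w2s) :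
    Algebra.adjoin ℂ {z1, z2, z1s, z2s} = ⊤ := by
  set S := Algebra.adjoin ℂ {z1, z2, z1s, z2s} with hS
  have mem : ∀ x ∈ ({z1, z2, z1s, z2s} : Set A), x ∈ S := fun x hx => Algebra.subset_adjoin hx
  obtain ⟨g, ⟨g1, g2, g3, g4⟩, -⟩ := huniv S ⟨z1, mem _ (by simp)⟩ ⟨z2, mem _ (by simp)⟩
    ⟨z1s, mem _ (by simp)⟩ ⟨z2s, mem _ (by simp)⟩ (Subtype.ext hrel)
  obtain ⟨h, -, hh⟩ := huniv A z1 z2 z1s z2s hrel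
  have key : S.val.comp g = AlgHom.id ℂ A := by
    rw [hh (S.val.comp g) (by simp [g1, g2, g3, g4]), hh (AlgHom.id ℂ A) (by simp)]
  refine eq_top_iff.2 fun a _ => ?_
  have := DFunLike.congr_fun key a
  rw [← show ((g a : S) : A) = a from this]
  exact (g a).2

lemma monomial_mem {A : Type} [CommRing A] [Algebra ℂ A] (z1 z2 z1s z2s : A)
    (S : Subalgebra ℂ A) (h11 : z1s * z1 ∈ S) (h12 : z1s * z2 ∈ S) (h21 : z2s * z1 ∈ S)
    (h22 : z2s * z2 ∈ S) (a b c d : ℕ) (h : a + b = c + d) :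
    z1 ^ a * z2 ^ b * (z1s ^ c * z2s ^ d) ∈ S := by
  induction hn : a + b generalizing a b c d with
  | zero =>
    obtain ⟨rfl, rfl⟩ : a = 0 ∧ b = 0 := by omega
    obtain ⟨rfl, rfl⟩ : c = 0 ∧ d = 0 := by omega
    simp
  | succ n ih =>
    rcases a with _ | a
    · obtain ⟨b, rfl⟩ : ∃ b', b = b' + 1 := ⟨b - 1, by omega⟩
      rcases c with _ | c
      · obtain ⟨d, rfl⟩ : ∃ d', d = d' + 1 := ⟨d - 1, by omega⟩
        convert S.mul_mem (ih 0 b 0 d (by omega) (by omega)) h22 using 1; ring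
      · convert S.mul_mem (ih 0 b c d (by omega) (by omega)) h12 using 1; ring
    · rcases c with _ | c
      · obtain ⟨d, rfl⟩ : ∃ d', d = d' + 1 := ⟨d - 1, by omega⟩
        convert S.mul_mem (ih a b 0 d (by omega) (by omega)) h21 using 1; ring
      · convert S.mul_mem (ih a b c d (by omega) (by omega)) h11 using 1; ring

/-- The base algebra is generated by the four products `z_i* z_j`. -/
lemma totalDeg_zero_le {A : Type} [CommRing A] [Algebra ℂ A]
    (𝒜 : ℤ × ℤ → Submodule ℂ A) [GradedAlgebra 𝒜] {z1 z2 z1s z2s : A}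
    (hz1 : z1 ∈ 𝒜 (1, 0)) (hz2 : z2 ∈ 𝒜 (0, 1))
    (hz1s : z1s ∈ 𝒜 (-1, 0)) (hz2s : z2s ∈ 𝒜 (0, -1))
    (htop : Algebra.adjoin ℂ {z1, z2, z1s, z2s} = ⊤)
    (S : Subalgebra ℂ A) (h11 : z1s * z1 ∈ S) (h12 : z1s * z2 ∈ S) (h21 : z2s * z1 ∈ S)
    (h22 : z2s * z2 ∈ S) {x : A} (hx : x ∈ totalDeg 𝒜 0) : x ∈ S := by
  classical
  obtain ⟨T, hT⟩ := exists_multiplier 𝒜 (fun p => if p.1 + p.2 = 0 then 1 else 0)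
  have hTx : T x = x := totalDeg_induction 𝒜 (P := fun x => T x = x)
    (fun p hp a ha => by simp [hT p a ha, hp]) (by simp)
    (fun a b ha hb => by simp [ha, hb]) hx
  suffices h : ∀ y, T y ∈ S by rw [← hTx]; exact h x
  intro y
  have hy : y ∈ Submodule.span ℂ (Submonoid.closure ({z1, z2, z1s, z2s} : Set A) : Set A) := by
    rw [← Algebra.adjoin_eq_span, htop]; trivial
  induction hy using Submodule.span_induction with
  | zero => simp
  | add a b _ _ ha hb => rw [map_add]; exact S.add_mem ha hb
  | smul c a _ ha => rw [map_smul]; exact S.smul_mem ha c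
  | mem y hy =>
    have hmon : ∃ a b c d : ℕ, y = z1 ^ a * z2 ^ b * (z1s ^ c * z2s ^ d) := by
      induction hy using Submonoid.closure_induction with
      | one => exact ⟨0, 0, 0, 0, by simp⟩
      | mul x y _ _ hx hy =>
        obtain ⟨a, b, c, d, rfl⟩ := hx
        obtain ⟨a', b', c', d', rfl⟩ := hy
        exact ⟨a + a', b + b', c + c', d + d', by ring⟩
      | mem x hx =>
        rcases hx with rfl | rfl | rfl | rfl
        · exact ⟨1, 0, 0, 0, by simp⟩
        · exact ⟨0, 1, 0, 0, by simp⟩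
        · exact ⟨0, 0, 1, 0, by simp⟩
        · exact ⟨0, 0, 0, 1, by simp⟩
    obtain ⟨a, b, c, d, rfl⟩ := hmon
    have hdeg : z1 ^ a * z2 ^ b * (z1s ^ c * z2s ^ d) ∈ 𝒜 (a • (1, 0) + b • (0, 1)
        + (c • (-1, 0) + d • (0, -1))) :=
      SetLike.mul_mem_graded
        (SetLike.mul_mem_graded (SetLike.pow_mem_graded a hz1) (SetLike.pow_mem_graded b hz2))
        (SetLike.mul_mem_graded (SetLike.pow_mem_graded c hz1s) (SetLike.pow_mem_graded d hz2s))
    rw [hT _ _ hdeg]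
    split_ifs with h
    · rw [one_smul]
      refine monomial_mem z1 z2 z1s z2s S h11 h12 h21 h22 a b c d ?_
      simp at h
      omega
    · simp

/-- `B` is a direct summand of `A` as a `B`-module, through the projection of `A` onto its
total-degree-`0` part. -/
lemma exists_projection {A : Type} [CommRing A] [Algebra ℂ A]
    (𝒜 : ℤ × ℤ → Submodule ℂ A) [GradedAlgebra 𝒜]
    (Bsub : Subalgebra ℂ A) (hBsub : Bsub.toSubmodule = totalDeg 𝒜 0) :
    ∃ π : A →ₗ[Bsub] Bsub, π 1 = 1 := by
  classical
  obtain ⟨T, hT⟩ := exists_multiplier 𝒜 (fun p => if p.1 + p.2 = 0 then 1 else 0)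
  have hmem : ∀ a, T a ∈ Bsub := by
    intro a
    rw [← Subalgebra.mem_toSubmodule, hBsub]
    refine homogeneous_induction 𝒜 (P := fun a => T a ∈ totalDeg 𝒜 0) (fun p a ha => ?_)
      (fun x y hx hy => by rw [map_add]; exact add_mem hx hy) a
    rw [hT p a ha]
    split_ifs with h
    · rw [one_smul]; exact mem_totalDeg 𝒜 h ha
    · simp
  have hmul : ∀ b ∈ Bsub, ∀ a, T (b * a) = b * T a := by
    intro b hb a
    rw [← Subalgebra.mem_toSubmodule, hBsub] at hb
    refine totalDeg_induction 𝒜 (P := fun b => T (b * a) = b * T a) (fun p hp b hb => ?_)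
      (by simp) (fun x y hx hy => by simp only [add_mul, map_add, hx, hy]) hb
    refine homogeneous_induction 𝒜 (P := fun a => T (b * a) = b * T a) (fun q a ha => ?_)
      (fun x y hx hy => by simp only [mul_add, map_add, hx, hy]) a
    rw [hT _ _ (SetLike.mul_mem_graded hb ha), hT q a ha]
    have : (p + q).1 + (p + q).2 = q.1 + q.2 := by
      simp only [Prod.fst_add, Prod.snd_add]; linarith
    rw [this, mul_smul_comm]
  refine ⟨{ toFun := fun a => ⟨T a, hmem a⟩, map_add' := fun x y => ?_, map_smul' := ?_ }, ?_⟩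
  · ext; simp
  · intro b a
    ext
    simpa [Subalgebra.smul_def] using hmul b b.2 a
  · ext
    simp [hT 0 1 (SetLike.one_mem_graded 𝒜)]

/-- The universal derivation of `B` extends to a derivation `A → A ⊗_B Ω¹_{B/ℂ}`, which is the
covariant derivative of the Grassmann connection of the projector `p_ij = z_i* z_j`. -/
lemma exists_horizontal_derivation {A : Type} [CommRing A] [Algebra ℂ A]
    (𝒜 : ℤ × ℤ → Submodule ℂ A) [GradedAlgebra 𝒜] {z1 z2 z1s z2s : A}
    (hz1 : z1 ∈ 𝒜 (1, 0)) (hz2 : z2 ∈ 𝒜 (0, 1))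
    (hz1s : z1s ∈ 𝒜 (-1, 0)) (hz2s : z2s ∈ 𝒜 (0, -1))
    (hrel : z1s * z1 + z2s * z2 = 1)
    (huniv : ∀ (C : Type) [CommRing C] [Algebra ℂ C] (w1 w2 w1s w2s : C),
      w1s * w1 + w2s * w2 = 1 →
      ∃! f : A →ₐ[ℂ] C, f z1 = w1 ∧ f z2 = w2 ∧ f z1s = w1s ∧ f z2s = w2s)
    (Bsub : Subalgebra ℂ A) (hBsub : Bsub.toSubmodule = totalDeg 𝒜 0) :
    ∃ D : Derivation ℂ A (A ⊗[Bsub] KaehlerDifferential ℂ Bsub),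
      ∀ b : Bsub, D b = 1 ⊗ₜ[Bsub] KaehlerDifferential.D ℂ Bsub b := by
  have hmem : ∀ {p q : ℤ × ℤ} {a a' : A}, a ∈ 𝒜 p → a' ∈ 𝒜 q → (p + q).1 + (p + q).2 = 0 →
      a * a' ∈ Bsub := by
    intro p q a a' ha ha' h
    rw [← Subalgebra.mem_toSubmodule, hBsub]
    exact mem_totalDeg 𝒜 h (SetLike.mul_mem_graded ha ha')
  let p11 : Bsub := ⟨z1s * z1, hmem hz1s hz1 (by simp)⟩
  let p12 : Bsub := ⟨z1s * z2, hmem hz1s hz2 (by simp)⟩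
  let p21 : Bsub := ⟨z2s * z1, hmem hz2s hz1 (by simp)⟩
  let p22 : Bsub := ⟨z2s * z2, hmem hz2s hz2 (by simp)⟩
  set d := KaehlerDifferential.D ℂ Bsub with hd
  have htr : p11 + p22 = 1 := Subtype.ext hrel
  have q11 : p11 * p11 + p12 * p21 = p11 := Subtype.ext (by
    change z1s * z1 * (z1s * z1) + z1s * z2 * (z2s * z1) = z1s * z1
    linear_combination (z1s * z1) * hrel)
  have q12 : p11 * p12 + p12 * p22 = p12 := Subtype.ext (by
    change z1s * z1 * (z1s * z2) + z1s * z2 * (z2s * z2) = z1s * z2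
    linear_combination (z1s * z2) * hrel)
  have q21 : p21 * p11 + p22 * p21 = p21 := Subtype.ext (by
    change z2s * z1 * (z1s * z1) + z2s * z2 * (z2s * z1) = z2s * z1
    linear_combination (z2s * z1) * hrel)
  have q22 : p21 * p12 + p22 * p22 = p22 := Subtype.ext (by
    change z2s * z1 * (z1s * z2) + z2s * z2 * (z2s * z2) = z2s * z2
    linear_combination (z2s * z2) * hrel)
  have r11 : p11 • d p11 + p12 • d p21 + (p11 • d p11 + p21 • d p12)
      = d p11 := by
    have h := congrArg d q11
    simp only [map_add, Derivation.leibniz] at h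
    exact Eq.trans (by abel) h
  have r12 : p11 • d p12 + p12 • d p22 + (p12 • d p11 + p22 • d p12)
      = d p12 := by
    have h := congrArg d q12
    simp only [map_add, Derivation.leibniz] at h
    exact Eq.trans (by abel) h
  have r21 : p21 • d p11 + p22 • d p21 + (p11 • d p21 + p21 • d p22)
      = d p21 := by
    have h := congrArg d q21
    simp only [map_add, Derivation.leibniz] at h
    exact Eq.trans (by abel) h
  have r22 : p21 • d p12 + p22 • d p22 + (p12 • d p21 + p22 • d p22)
      = d p22 := by
    have h := congrArg d q22
    simp only [map_add, Derivation.leibniz] at h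
    exact Eq.trans (by abel) h
  -- moving elements of `B` across the tensor sign
  have mv : ∀ (b : Bsub) (w : KaehlerDifferential ℂ Bsub) (x y : A), x * y = b →
      x • (y ⊗ₜ[Bsub] w) = (1 : A) ⊗ₜ[Bsub] (b • w) := by
    intro b w x y h
    rw [TensorProduct.smul_tmul', smul_eq_mul, h, TensorProduct.tmul_smul,
      TensorProduct.smul_tmul', Subalgebra.smul_def, smul_eq_mul, mul_one]
  -- `2 tr (p dp) = d (tr p²) = d (tr p) = 0`
  have trace : p11 • d p11 + p12 • d p21 + (p21 • d p12 + p22 • d p22) = 0 := by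
    have h := congrArg d (congrArg₂ (· + ·) q11 q22)
    simp only [map_add, Derivation.leibniz] at h
    have h2 : d p11 + d p22 = 0 := by rw [← map_add, htr, Derivation.map_one_eq_zero]
    rw [h2] at h
    have h3 : (2 : ℂ) • (p11 • d p11 + p12 • d p21 + (p21 • d p12 + p22 • d p22)) = 0 := by
      rw [← h, two_smul]; abel
    exact (smul_eq_zero.1 h3).resolve_left two_ne_zero
  obtain ⟨D, D1, D2, D1s, D2s⟩ := exists_derivation hrel huniv
    (A ⊗[Bsub] KaehlerDifferential ℂ Bsub)
    (z1 ⊗ₜ d p11 + z2 ⊗ₜ d p21) (z1 ⊗ₜ d p12 + z2 ⊗ₜ d p22)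
    (z1s ⊗ₜ d p11 + z2s ⊗ₜ d p12) (z1s ⊗ₜ d p21 + z2s ⊗ₜ d p22) (by
      simp only [smul_add]
      rw [mv p11 _ z1s z1 rfl, mv p12 _ z1s z2 rfl, mv p11 _ z1 z1s (mul_comm _ _),
        mv p21 _ z1 z2s (mul_comm _ _), mv p21 _ z2s z1 rfl, mv p22 _ z2s z2 rfl,
        mv p12 _ z2 z1s (mul_comm _ _), mv p22 _ z2 z2s (mul_comm _ _)]
      simp only [← TensorProduct.tmul_add]
      rw [show ∀ x y z w : KaehlerDifferential ℂ Bsub, x + y + (x + z) + (z + w + (y + w))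
        = x + y + (z + w) + (x + y + (z + w)) by intros; abel, trace, add_zero,
        TensorProduct.tmul_zero])
  refine ⟨D, fun b => ?_⟩
  let S : Subalgebra ℂ Bsub :=
    { carrier := {b | D b = 1 ⊗ₜ[Bsub] d b}
      mul_mem' := fun {a b} ha hb => by
        simp only [Set.mem_ofPred_eq, MulMemClass.coe_mul, Derivation.leibniz] at ha hb ⊢
        rw [ha, hb, mv a _ _ 1 (mul_one _), mv b _ _ 1 (mul_one _), TensorProduct.tmul_add]
      add_mem' := fun {a b} ha hb => by
        simp only [Set.mem_ofPred_eq, AddMemClass.coe_add, map_add] at ha hb ⊢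
        rw [ha, hb, TensorProduct.tmul_add]
      algebraMap_mem' := fun r => by simp }
  have hS : ∀ b : Bsub, b ∈ S ↔ D b = 1 ⊗ₜ[Bsub] d b := fun b => Iff.rfl
  rw [← hS]
  have hb : (b : A) ∈ S.map Bsub.val := by
    refine totalDeg_zero_le 𝒜 hz1 hz2 hz1s hz2s (adjoin_generators_eq_top hrel huniv)
      (S.map Bsub.val) ⟨p11, ?_, rfl⟩ ⟨p12, ?_, rfl⟩ ⟨p21, ?_, rfl⟩ ⟨p22, ?_, rfl⟩
      (by rw [← hBsub]; exact b.2)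
    · refine (hS _).2 ?_
      change D (z1s * z1) = _
      rw [Derivation.leibniz, D1, D1s, smul_add, smul_add, mv p11 _ z1s z1 rfl,
        mv p12 _ z1s z2 rfl, mv p11 _ z1 z1s (mul_comm _ _), mv p21 _ z1 z2s (mul_comm _ _)]
      simp only [← TensorProduct.tmul_add, r11]
    · refine (hS _).2 ?_
      change D (z1s * z2) = _
      rw [Derivation.leibniz, D2, D1s, smul_add, smul_add, mv p11 _ z1s z1 rfl,
        mv p12 _ z1s z2 rfl, mv p12 _ z2 z1s (mul_comm _ _), mv p22 _ z2 z2s (mul_comm _ _)]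
      simp only [← TensorProduct.tmul_add, r12]
    · refine (hS _).2 ?_
      change D (z2s * z1) = _
      rw [Derivation.leibniz, D1, D2s, smul_add, smul_add, mv p21 _ z2s z1 rfl,
        mv p22 _ z2s z2 rfl, mv p11 _ z1 z1s (mul_comm _ _), mv p21 _ z1 z2s (mul_comm _ _)]
      simp only [← TensorProduct.tmul_add, r21]
    · refine (hS _).2 ?_
      change D (z2s * z2) = _
      rw [Derivation.leibniz, D2, D2s, smul_add, smul_add, mv p21 _ z2s z1 rfl,
        mv p22 _ z2s z2 rfl, mv p12 _ z2 z1s (mul_comm _ _), mv p22 _ z2 z2s (mul_comm _ _)]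
      simp only [← TensorProduct.tmul_add, r22]
  obtain ⟨b', hb', h⟩ := hb
  rwa [← Subtype.ext h]

/-! ### Kähler differentials of the base -/

lemma kaehler_induction {B : Type} [CommRing B] [Algebra ℂ B]
    {P : KaehlerDifferential ℂ B → Prop} (zero : P 0) (add : ∀ x y, P x → P y → P (x + y))
    (smulD : ∀ b b' : B, P (b • KaehlerDifferential.D ℂ B b')) (w : KaehlerDifferential ℂ B) :
    P w := by
  have hw : w ∈ Submodule.span B (Set.range (KaehlerDifferential.D ℂ B)) := by
    rw [KaehlerDifferential.span_range_derivation]; trivial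
  induction hw using Submodule.closure_induction with
  | zero => exact zero
  | add x y _ _ hx hy => exact add x y hx hy
  | smul_mem r x hx => obtain ⟨b', rfl⟩ := hx; exact smulD r b'

/-- The map `Ω¹_{B/ℂ} → Ω¹(A)`, `b db' ↦ b db'`, where `Ω¹(A)` sits inside the quotient of `A ⊗ A`
by the square of the kernel of the multiplication. -/
lemma exists_kaehler_to_quotient {A : Type} [CommRing A] [Algebra ℂ A]
    (K2 : Submodule ℂ (A ⊗[ℂ] A))
    (hK2 : K2 = LinearMap.ker (LinearMap.mul' ℂ A) * LinearMap.ker (LinearMap.mul' ℂ A))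
    (B : Subalgebra ℂ A) :
    ∃ e : KaehlerDifferential ℂ B →ₗ[ℂ] ((A ⊗[ℂ] A) ⧸ K2), ∀ b b' : B,
      e (b • KaehlerDifferential.D ℂ B b')
        = K2.mkQ ((b : A) ⊗ₜ[ℂ] (b' : A) - ((b : A) * b') ⊗ₜ[ℂ] (1 : A)) := by
  let I : Ideal (A ⊗[ℂ] A) := RingHom.ker (Algebra.TensorProduct.lmul' ℂ (S := A))
  have hI : K2 = (I * I).restrictScalars ℂ := by
    rw [hK2]
    apply le_antisymm
    · exact Submodule.mul_le.2 fun x hx y hy => Ideal.mul_mem_mul (I := I) (J := I) hx hy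
    · intro x hx
      refine Submodule.mul_induction_on (M := I) (N := I) hx (fun x hx y hy => ?_)
        (fun x y hx hy => add_mem hx hy)
      exact Submodule.mul_mem_mul hx hy
  subst hI
  have hmem : ∀ a : A, (1 : A) ⊗ₜ[ℂ] a - a ⊗ₜ[ℂ] (1 : A) ∈ I := fun a => by
    simp [I, RingHom.mem_ker]
  let D' : Derivation ℂ A ((A ⊗[ℂ] A) ⧸ (I * I)) := Derivation.mk'
    ((Ideal.Quotient.mkₐ ℂ (I * I)).toLinearMap ∘ₗ
      (TensorProduct.mk ℂ A A 1 - (TensorProduct.mk ℂ A A).flip 1)) (by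
      intro a b
      change Ideal.Quotient.mk (I * I) (1 ⊗ₜ[ℂ] (a * b) - (a * b) ⊗ₜ[ℂ] 1)
        = a • Ideal.Quotient.mk (I * I) (1 ⊗ₜ[ℂ] b - b ⊗ₜ[ℂ] 1)
          + b • Ideal.Quotient.mk (I * I) (1 ⊗ₜ[ℂ] a - a ⊗ₜ[ℂ] 1)
      have hs : ∀ (a : A) (x : A ⊗[ℂ] A), a • Ideal.Quotient.mk (I * I) x
        = Ideal.Quotient.mk (I * I) (a • x) := fun _ _ => rfl
      rw [hs, hs, ← map_add, Ideal.Quotient.eq]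
      convert Ideal.mul_mem_mul (hmem a) (hmem b) using 1
      simp only [smul_sub, TensorProduct.smul_tmul', smul_eq_mul, mul_one, sub_mul, mul_sub,
        Algebra.TensorProduct.tmul_mul_tmul, one_mul, mul_comm b a]
      abel)
  refine ⟨(Submodule.Quotient.restrictScalarsEquiv ℂ (I * I)).symm.toLinearMap ∘ₗ
    D'.liftKaehlerDifferential.restrictScalars ℂ ∘ₗ
    (KaehlerDifferential.map ℂ ℂ B A).restrictScalars ℂ, fun b b' => ?_⟩
  rw [LinearMap.comp_apply, LinearMap.comp_apply, LinearMap.restrictScalars_apply,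
    LinearMap.restrictScalars_apply, LinearMap.map_smul (KaehlerDifferential.map ℂ ℂ B A) b,
    KaehlerDifferential.map_D]
  change (Submodule.Quotient.restrictScalarsEquiv ℂ (I * I)).symm
    (D'.liftKaehlerDifferential ((b : A) • KaehlerDifferential.D ℂ A (b' : A))) = _
  rw [LinearMap.map_smul D'.liftKaehlerDifferential, Derivation.liftKaehlerDifferential_comp_D]
  change (Submodule.Quotient.restrictScalarsEquiv ℂ (I * I)).symm (Submodule.Quotient.mk
    ((b : A) • (1 ⊗ₜ[ℂ] (b' : A) - (b' : A) ⊗ₜ[ℂ] 1))) = _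
  rw [smul_sub, TensorProduct.smul_tmul', TensorProduct.smul_tmul', smul_eq_mul, mul_one,
    smul_eq_mul]
  rfl

/-- The map `a ⊗ a' ↦ a D a'` attached to a derivation vanishes on the square of the kernel of the
multiplication, since `G (x y) = μ(x) G y + μ(y) G x`. -/
lemma derivation_kills_square {A : Type} [CommRing A] [Algebra ℂ A]
    {M : Type} [AddCommGroup M] [Module A M] [Module ℂ M] [IsScalarTower ℂ A M]
    (D : Derivation ℂ A M) :
    ∃ G : A ⊗[ℂ] A →ₗ[ℂ] M, (∀ a a', G (a ⊗ₜ[ℂ] a') = a • D a') ∧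
      LinearMap.ker (LinearMap.mul' ℂ A) * LinearMap.ker (LinearMap.mul' ℂ A)
        ≤ LinearMap.ker G := by
  let G : A ⊗[ℂ] A →ₗ[ℂ] M := TensorProduct.lift (LinearMap.mk₂ ℂ (fun a a' => a • D a')
    (fun a b c => add_smul a b _) (fun c a b => smul_assoc c a _)
    (fun a b c => by rw [map_add, smul_add])
    (fun c a b => by
      rw [Derivation.map_smul, ← algebraMap_smul A c (D b), ← algebraMap_smul A c (a • D b),
        smul_smul, smul_smul, mul_comm]))
  have hG : ∀ a a', G (a ⊗ₜ[ℂ] a') = a • D a' := fun a a' => rfl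
  refine ⟨G, hG, Submodule.mul_le.2 fun x hx y hy => ?_⟩
  have key : ∀ x y : A ⊗[ℂ] A,
      G (x * y) = LinearMap.mul' ℂ A x • G y + LinearMap.mul' ℂ A y • G x := by
    intro x y
    induction x with
    | zero => simp
    | add x x' hx hx' => rw [add_mul, map_add, hx, hx', map_add, map_add, add_smul, smul_add]; abel
    | tmul a a' =>
      induction y with
      | zero => simp
      | add y y' hy hy' =>
        rw [mul_add, map_add, hy, hy', map_add, map_add, add_smul, smul_add]; abel
      | tmul c c' =>
        simp only [Algebra.TensorProduct.tmul_mul_tmul, hG, LinearMap.mul'_apply,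
          Derivation.leibniz, smul_add, smul_smul]
        congr 2 <;> ring
  rw [LinearMap.mem_ker] at hx hy ⊢
  rw [key, hx, hy, zero_smul, zero_smul, add_zero]

/-- `Ω¹_{B/ℂ}` is isomorphic to the image of `B dB` in `Ω¹(A)`, compatibly with `d` and with the
left action of `B`. -/
lemma exists_kaehler_embedding {A : Type} [CommRing A] [Algebra ℂ A]
    (𝒜 : ℤ × ℤ → Submodule ℂ A) [GradedAlgebra 𝒜] {z1 z2 z1s z2s : A}
    (hz1 : z1 ∈ 𝒜 (1, 0)) (hz2 : z2 ∈ 𝒜 (0, 1))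
    (hz1s : z1s ∈ 𝒜 (-1, 0)) (hz2s : z2s ∈ 𝒜 (0, -1))
    (hrel : z1s * z1 + z2s * z2 = 1)
    (huniv : ∀ (C : Type) [CommRing C] [Algebra ℂ C] (w1 w2 w1s w2s : C),
      w1s * w1 + w2s * w2 = 1 →
      ∃! f : A →ₐ[ℂ] C, f z1 = w1 ∧ f z2 = w2 ∧ f z1s = w1s ∧ f z2s = w2s)
    (Bsub : Subalgebra ℂ A) (hBsub : Bsub.toSubmodule = totalDeg 𝒜 0)
    (K2 BdB : Submodule ℂ (A ⊗[ℂ] A))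
    (hK2 : K2 = LinearMap.ker (LinearMap.mul' ℂ A) * LinearMap.ker (LinearMap.mul' ℂ A))
    (hBdB : BdB = Submodule.span ℂ {y : A ⊗[ℂ] A | ∃ b ∈ totalDeg 𝒜 0, ∃ b' ∈ totalDeg 𝒜 0,
        y = b ⊗ₜ[ℂ] b' - (b * b') ⊗ₜ[ℂ] (1 : A)}) :
    ∃ e : KaehlerDifferential ℂ ↥Bsub →ₗ[ℂ] ((A ⊗[ℂ] A) ⧸ K2),
        Function.Injective e ∧
        LinearMap.range e = Submodule.map K2.mkQ BdB ∧
        (∀ b : ↥Bsub,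
          e (KaehlerDifferential.D ℂ ↥Bsub b)
            = K2.mkQ ((1 : A) ⊗ₜ[ℂ] (b : A) - (b : A) ⊗ₜ[ℂ] (1 : A))) ∧
        (∀ (lact : A → ((A ⊗[ℂ] A) ⧸ K2) →ₗ[ℂ] ((A ⊗[ℂ] A) ⧸ K2)),
          (∀ (a : A) (x : A ⊗[ℂ] A), lact a (K2.mkQ x)
            = K2.mkQ (TensorProduct.map (LinearMap.mulLeft ℂ a) LinearMap.id x)) →
          ∀ (b : ↥Bsub) (w : KaehlerDifferential ℂ ↥Bsub),
            e (b • w) = lact (b : A) (e w)) := by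
  obtain ⟨e, he⟩ := exists_kaehler_to_quotient K2 hK2 Bsub
  have memB : ∀ a : A, a ∈ totalDeg 𝒜 0 ↔ a ∈ Bsub := fun a => by
    rw [← hBsub, Subalgebra.mem_toSubmodule]
  refine ⟨e, ?_, ?_, ?_, ?_⟩
  · obtain ⟨D, hD⟩ := exists_horizontal_derivation 𝒜 hz1 hz2 hz1s hz2s hrel huniv Bsub hBsub
    obtain ⟨G, hG, hGK⟩ := derivation_kills_square D
    obtain ⟨π, hπ⟩ := exists_projection 𝒜 Bsub hBsub
    rw [← hK2] at hGK
    have h1 : ∀ w, K2.liftQ G hGK (e w) = (1 : A) ⊗ₜ[Bsub] w := by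
      refine kaehler_induction (by simp)
        (fun x y hx hy => by rw [map_add, map_add, hx, hy, TensorProduct.tmul_add]) ?_
      intro b b'
      rw [he, Submodule.mkQ_apply, Submodule.liftQ_apply, map_sub, hG, hG, hD,
        Derivation.map_one_eq_zero, smul_zero, sub_zero, TensorProduct.smul_tmul',
        TensorProduct.tmul_smul, TensorProduct.smul_tmul', Subalgebra.smul_def]
    have h2 : ∀ w : KaehlerDifferential ℂ Bsub, TensorProduct.lid Bsub _
        (LinearMap.rTensor (KaehlerDifferential ℂ Bsub) π ((1 : A) ⊗ₜ[Bsub] w)) = w := by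
      intro w
      rw [LinearMap.rTensor_tmul, hπ, TensorProduct.lid_tmul, one_smul]
    intro w w' hw
    rw [← h2 w, ← h1, hw, h1, h2]
  · apply le_antisymm
    · rintro _ ⟨w, rfl⟩
      refine kaehler_induction (P := fun w => e w ∈ Submodule.map K2.mkQ BdB) (by simp)
        (fun x y hx hy => by rw [map_add]; exact add_mem hx hy) (fun b b' => ?_) w
      rw [he]
      refine Submodule.mem_map_of_mem ?_
      rw [hBdB]
      exact Submodule.subset_span ⟨b, (memB _).2 b.2, b', (memB _).2 b'.2, rfl⟩
    · rw [hBdB, Submodule.map_span, Submodule.span_le]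
      rintro _ ⟨_, ⟨b, hb, b', hb', rfl⟩, rfl⟩
      exact ⟨_, he ⟨b, (memB b).1 hb⟩ ⟨b', (memB b').1 hb'⟩⟩
  · intro b
    simpa using he 1 b
  · intro lact hlact b w
    refine kaehler_induction (P := fun w => e (b • w) = lact (b : A) (e w)) (by simp)
      (fun x y hx hy => by rw [smul_add, map_add, map_add, map_add, hx, hy]) (fun c c' => ?_) w
    rw [smul_smul, he, he, hlact]
    simp [mul_assoc]

/-- `ω⁰ = z₁* dz₁ + z₂* dz₂ ∈ Ω¹(A)` is `ℤ²`-homogeneous of degree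
`(0,0)` and satisfies `v(ω⁰) = 1`, so it is a connection, and
`Con(A,δ) = {ω⁰ + α : α ∈ B dB}` with `B dB ≅ Ω¹_{B/ℂ}` as a `B`-module with
derivation; analogously `ω⁰_θ = z₁* d_θz₁ + z₂* d_θz₂ ∈ Ω¹(A_θ)` is homogeneous of
degree `(0,0)`, satisfies `v_θ(ω⁰_θ) = 1`, and `Con(A_θ,δ) = {ω⁰_θ + α : α ∈ B d_θB}`. -/
theorem connections_on_classical_and_deformed_hopf_fibrations
    (A : Type) [CommRing A] [Algebra ℂ A]
    (𝒜 : ℤ × ℤ → Submodule ℂ A) [GradedAlgebra 𝒜]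
    (z1 z2 z1s z2s : A)
    (hz1 : z1 ∈ 𝒜 (1, 0)) (hz2 : z2 ∈ 𝒜 (0, 1))
    (hz1s : z1s ∈ 𝒜 (-1, 0)) (hz2s : z2s ∈ 𝒜 (0, -1))
    (hrel : z1s * z1 + z2s * z2 = 1)
    (huniv : ∀ (C : Type) [CommRing C] [Algebra ℂ C] (w1 w2 w1s w2s : C),
      w1s * w1 + w2s * w2 = 1 →
      ∃! f : A →ₐ[ℂ] C, f z1 = w1 ∧ f z2 = w2 ∧ f z1s = w1s ∧ f z2s = w2s)
    (θ : ℝ)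
    (stp : A →ₗ[ℂ] A →ₗ[ℂ] A)
    (hstp : ∀ (p q : ℤ × ℤ), ∀ a ∈ 𝒜 p, ∀ a' ∈ 𝒜 q, stp a a' = phase θ p q • (a * a'))
    (bmul : A ⊗[ℂ] A →ₗ[ℂ] A ⊗[ℂ] A →ₗ[ℂ] A ⊗[ℂ] A)
    (hbmul : ∀ (p p' u u' : ℤ × ℤ), ∀ a ∈ 𝒜 p, ∀ a' ∈ 𝒜 p', ∀ c ∈ 𝒜 u, ∀ c' ∈ 𝒜 u',
      bmul (a ⊗ₜ[ℂ] a') (c ⊗ₜ[ℂ] c')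
        = rphase θ u p' • ((stp a c) ⊗ₜ[ℂ] (stp a' c')))
    -- the Euler operator, multiplying total-degree-`n` elements by `n`
    (Euler : A →ₗ[ℂ] A)
    (hEuler : ∀ (p : ℤ × ℤ), ∀ a ∈ 𝒜 p, Euler a = ((p.1 + p.2 : ℤ) : ℂ) • a)
    -- `B` as subalgebra of total-degree-`0` elements
    (Bsub : Subalgebra ℂ A) (hBsub : Bsub.toSubmodule = totalDeg 𝒜 0) :
    -- notation: `K = Γ¹(A)`, `K2 = (Γ¹(A))²`, `Kθ = Γ¹(A_θ)`, `K2θ = (Γ¹(A_θ))²`,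
    -- `vrep`/`vθrep` the vertical lifts on representatives, `ωrep`/`ωθrep` the
    -- representatives of `ω⁰`/`ω⁰_θ`, and `BdB`/`BdθB` the representatives of the
    -- horizontal forms `B dB`/`B d_θB`
    ∀ (K K2 Kθ K2θ : Submodule ℂ (A ⊗[ℂ] A))
      (vrep vθrep : A ⊗[ℂ] A →ₗ[ℂ] A) (ωrep ωθrep : A ⊗[ℂ] A)
      (BdB BdθB : Submodule ℂ (A ⊗[ℂ] A)),
      K = LinearMap.ker (LinearMap.mul' ℂ A) →
      K2 = K * K →
      Kθ = LinearMap.ker (TensorProduct.lift stp) →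
      K2θ = Submodule.span ℂ {y : A ⊗[ℂ] A | ∃ x ∈ Kθ, ∃ x' ∈ Kθ, y = bmul x x'} →
      vrep = (LinearMap.mul' ℂ A).comp (TensorProduct.map LinearMap.id Euler) →
      vθrep = (TensorProduct.lift stp).comp (TensorProduct.map LinearMap.id Euler) →
      ωrep = z1s ⊗ₜ[ℂ] z1 - (z1s * z1) ⊗ₜ[ℂ] (1 : A)
        + (z2s ⊗ₜ[ℂ] z2 - (z2s * z2) ⊗ₜ[ℂ] (1 : A)) →
      ωθrep = (stp z1s 1) ⊗ₜ[ℂ] z1 - (stp z1s z1) ⊗ₜ[ℂ] (1 : A)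
        + ((stp z2s 1) ⊗ₜ[ℂ] z2 - (stp z2s z2) ⊗ₜ[ℂ] (1 : A)) →
      BdB = Submodule.span ℂ {y : A ⊗[ℂ] A | ∃ b ∈ totalDeg 𝒜 0, ∃ b' ∈ totalDeg 𝒜 0,
        y = b ⊗ₜ[ℂ] b' - (b * b') ⊗ₜ[ℂ] (1 : A)} →
      BdθB = Submodule.span ℂ {y : A ⊗[ℂ] A | ∃ b ∈ totalDeg 𝒜 0, ∃ b' ∈ totalDeg 𝒜 0,
        y = (stp b 1) ⊗ₜ[ℂ] b' - (stp b b') ⊗ₜ[ℂ] (1 : A)} →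
      -- the classical `ω⁰` is a homogeneous `1`-form of degree `(0,0)` with `v(ω⁰) = 1`
      (ωrep ∈ K ∧ ωrep ∈ tensorDeg 𝒜 (0, 0) ∧ vrep ωrep = 1) ∧
      -- the classical space of connections is the affine space `ω⁰ + B dB`
      ({w : (A ⊗[ℂ] A) ⧸ K2 | ∃ x : A ⊗[ℂ] A,
          x ∈ K ∧ x ∈ tensorTotalDeg 𝒜 0 ∧ vrep x = 1 ∧ w = K2.mkQ x}
        = {w : (A ⊗[ℂ] A) ⧸ K2 | ∃ x ∈ BdB, w = K2.mkQ (ωrep + x)}) ∧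
      -- `B dB ≅ Ω¹_{B/ℂ}` as a `B`-module with derivation
      (∃ e : KaehlerDifferential ℂ ↥Bsub →ₗ[ℂ] ((A ⊗[ℂ] A) ⧸ K2),
        Function.Injective e ∧
        LinearMap.range e = Submodule.map K2.mkQ BdB ∧
        (∀ b : ↥Bsub,
          e (KaehlerDifferential.D ℂ ↥Bsub b)
            = K2.mkQ ((1 : A) ⊗ₜ[ℂ] (b : A) - (b : A) ⊗ₜ[ℂ] (1 : A))) ∧
        (∀ (lact : A → ((A ⊗[ℂ] A) ⧸ K2) →ₗ[ℂ] ((A ⊗[ℂ] A) ⧸ K2)),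
          (∀ (a : A) (x : A ⊗[ℂ] A), lact a (K2.mkQ x)
            = K2.mkQ (TensorProduct.map (LinearMap.mulLeft ℂ a) LinearMap.id x)) →
          ∀ (b : ↥Bsub) (w : KaehlerDifferential ℂ ↥Bsub),
            e (b • w) = lact (b : A) (e w))) ∧
      -- the deformed `ω⁰_θ` is a homogeneous `1`-form of degree `(0,0)` with
      -- `v_θ(ω⁰_θ) = 1`
      (ωθrep ∈ Kθ ∧ ωθrep ∈ tensorDeg 𝒜 (0, 0) ∧ vθrep ωθrep = 1) ∧
      -- the deformed space of connections is the affine space `ω⁰_θ + B d_θB`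
      ({w : (A ⊗[ℂ] A) ⧸ K2θ | ∃ x : A ⊗[ℂ] A,
          x ∈ Kθ ∧ x ∈ tensorTotalDeg 𝒜 0 ∧ vθrep x = 1 ∧ w = K2θ.mkQ x}
        = {w : (A ⊗[ℂ] A) ⧸ K2θ | ∃ x ∈ BdθB, w = K2θ.mkQ (ωθrep + x)}) := by
  rintro K K2 Kθ K2θ vrep vθrep ωrep ωθrep BdB BdθB hK hK2 hKθ hK2θ hv hvθ hω hωθ hBdB hBdθB
  -- the classical fibration is the case `θ = 0` with the ordinary products
  have hcl := star_connections 𝒜 hz1 hz2 hz1s hz2s hrel 0 (LinearMap.mul ℂ A)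
    (fun p q a _ a' _ => by simp [phase]) (LinearMap.mul ℂ (A ⊗[ℂ] A))
    (fun p p' u u' a _ a' _ c _ c' _ => by simp [rphase]) Euler hEuler K K2 vrep ωrep BdB hK
    (by
      rw [hK2]
      apply le_antisymm
      · exact Submodule.mul_le.2 fun x hx y hy => Submodule.subset_span ⟨x, hx, y, hy, rfl⟩
      · rw [Submodule.span_le]
        rintro _ ⟨x, hx, y, hy, rfl⟩
        exact Submodule.mul_mem_mul hx hy)
    hv (by simpa using hω) (by simpa using hBdB)
  have hdef := star_connections 𝒜 hz1 hz2 hz1s hz2s hrel θ stp hstp bmul hbmul Euler hEuler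
    Kθ K2θ vθrep ωθrep BdθB hKθ hK2θ hvθ hωθ hBdθB
  exact ⟨hcl.1, hcl.2, exists_kaehler_embedding 𝒜 hz1 hz2 hz1s hz2s hrel huniv Bsub hBsub K2 BdB
    (by rw [hK2, hK]) hBdB, hdef.1, hdef.2⟩
end
end

section
/- The linear bijection φ̄_θ : Ω¹(A_θ) → Ω¹(A) restricts to a bijection from the set Con(A_θ,δ) of connections on the deformed Hopf fibration onto the set Con(A,δ) of connections on the classical Hopf fibration. -/
/-!
The phase map `φ` is diagonal on tensors of homogeneous elements with nonzero eigenvalues, hence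
invertible, its inverse `ψ` being diagonal too (`exists_diagonal`). Since `m_θ = m ∘ φ` and
`E` preserves degrees, `φ` intertwines the multiplications and the vertical maps, so it matches
`Γ¹(A_θ)` with `Γ¹(A)` and `v_θ` with `v`; being diagonal, it preserves total degree.

What remains is injectivity of `φ̄_θ`, that is `Γ¹(A)² ⊆ φ (Γ¹(A_θ)²)`. The phases satisfy
`φ (x ·_θ x') = e^{πiθ(P₁Q₂ − P₂Q₁)} φ x · φ x'` for `x`, `x'` homogeneous of `ℤ²`-degrees `P`, `Q`
in `A ⊗ A` (`phi_bmul`), and `Γ¹(A)` is spanned by homogeneous elements (`ker_le_span`), because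
`x = x - m(x) ⊗ 1` for `x ∈ Γ¹(A)`. So every product of homogeneous elements of `Γ¹(A)` is, up to a
nonzero scalar, the image under `φ` of a braided product of elements of `Γ¹(A_θ)`.
-/

set_option synthInstance.maxHeartbeats 1000000
set_option maxHeartbeats 1000000

open scoped TensorProduct
noncomputable section

section PhaseMap

variable {A : Type} [CommRing A] [Algebra ℂ A] (𝒜 : ℤ × ℤ → Submodule ℂ A)

variable {𝒜} in
lemma diagonal_mem_tensorDeg {c : ℤ × ℤ → ℤ × ℤ → ℂ} {ψ : A ⊗[ℂ] A →ₗ[ℂ] A ⊗[ℂ] A}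
    (hψ : ∀ (p q : ℤ × ℤ), ∀ a ∈ 𝒜 p, ∀ a' ∈ 𝒜 q, ψ (a ⊗ₜ[ℂ] a') = c p q • (a ⊗ₜ[ℂ] a'))
    (P : ℤ × ℤ) : tensorDeg 𝒜 P ≤ (tensorDeg 𝒜 P).comap ψ := by
  refine Submodule.span_le.2 ?_
  rintro _ ⟨p, q, a, ha, a', ha', hpq, rfl⟩
  change ψ _ ∈ tensorDeg 𝒜 P
  rw [hψ p q a ha a' ha']
  exact Submodule.smul_mem _ _ (Submodule.subset_span ⟨p, q, a, ha, a', ha', hpq, rfl⟩)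

variable {𝒜} in
lemma diagonal_mem_tensorTotalDeg {c : ℤ × ℤ → ℤ × ℤ → ℂ} {ψ : A ⊗[ℂ] A →ₗ[ℂ] A ⊗[ℂ] A}
    (hψ : ∀ (p q : ℤ × ℤ), ∀ a ∈ 𝒜 p, ∀ a' ∈ 𝒜 q, ψ (a ⊗ₜ[ℂ] a') = c p q • (a ⊗ₜ[ℂ] a'))
    (n : ℤ) : tensorTotalDeg 𝒜 n ≤ (tensorTotalDeg 𝒜 n).comap ψ := by
  refine iSup₂_le fun P hP => (diagonal_mem_tensorDeg hψ P).trans (Submodule.comap_mono ?_)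
  exact le_iSup₂_of_le P hP le_rfl

variable [GradedAlgebra 𝒜]

lemma phase_ne_zero (θ : ℝ) (p q : ℤ × ℤ) : phase θ p q ≠ 0 := Complex.exp_ne_zero _

lemma span_hom_tensor :
    Submodule.span ℂ {x : A ⊗[ℂ] A | ∃ (p q : ℤ × ℤ), ∃ a ∈ 𝒜 p, ∃ a' ∈ 𝒜 q, x = a ⊗ₜ[ℂ] a'}
      = ⊤ := by
  rw [eq_top_iff, ← TensorProduct.span_tmul_eq_top, Submodule.span_le]
  rintro _ ⟨a, b, rfl⟩
  induction a using DirectSum.Decomposition.inductionOn 𝒜 with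
  | zero => simp
  | add a a' h h' =>
    rw [TensorProduct.add_tmul]
    exact Submodule.add_mem _ h h'
  | homogeneous a =>
    induction b using DirectSum.Decomposition.inductionOn 𝒜 with
    | zero => simp
    | add b b' h h' =>
      rw [TensorProduct.tmul_add]
      exact Submodule.add_mem _ h h'
    | homogeneous b =>
      exact Submodule.subset_span ⟨_, _, _, a.2, _, b.2, rfl⟩

lemma hom_tensor_ext {M : Type} [AddCommGroup M] [Module ℂ M] (f g : A ⊗[ℂ] A →ₗ[ℂ] M)
    (h : ∀ (p q : ℤ × ℤ), ∀ a ∈ 𝒜 p, ∀ a' ∈ 𝒜 q, f (a ⊗ₜ[ℂ] a') = g (a ⊗ₜ[ℂ] a')) : f = g := by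
  apply LinearMap.ext_on (span_hom_tensor 𝒜)
  rintro _ ⟨p, q, a, ha, a', ha', rfl⟩
  exact h p q a ha a' ha'

lemma exists_diagonal (c : ℤ × ℤ → ℤ × ℤ → ℂ) :
    ∃ ψ : A ⊗[ℂ] A →ₗ[ℂ] A ⊗[ℂ] A, ∀ (p q : ℤ × ℤ), ∀ a ∈ 𝒜 p, ∀ a' ∈ 𝒜 q,
      ψ (a ⊗ₜ[ℂ] a') = c p q • (a ⊗ₜ[ℂ] a') := by
  classical
  -- `T p` scales the degree-`q` part of the second tensor factor by `c p q`.
  let T : ℤ × ℤ → A →ₗ[ℂ] A := fun p =>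
    (DirectSum.toModule ℂ (ℤ × ℤ) A (fun q => c p q • (𝒜 q).subtype)).comp
      (DirectSum.decomposeLinearEquiv 𝒜).toLinearMap
  have hT : ∀ p q, ∀ a ∈ 𝒜 q, T p a = c p q • a := by
    intro p q a ha
    simp only [T, LinearMap.comp_apply, LinearEquiv.coe_coe,
      DirectSum.decomposeLinearEquiv_apply]
    rw [DirectSum.decompose_of_mem 𝒜 ha, ← DirectSum.lof_eq_of ℂ, DirectSum.toModule_lof]
    rfl
  let S : A →ₗ[ℂ] A →ₗ[ℂ] A ⊗[ℂ] A :=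
    (DirectSum.toModule ℂ (ℤ × ℤ) (A →ₗ[ℂ] A ⊗[ℂ] A)
      (fun p => ((TensorProduct.mk ℂ A A).compl₂ (T p)).comp (𝒜 p).subtype)).comp
      (DirectSum.decomposeLinearEquiv 𝒜).toLinearMap
  refine ⟨TensorProduct.lift S, fun p q a ha a' ha' => ?_⟩
  rw [TensorProduct.lift.tmul]
  simp only [S, LinearMap.comp_apply, LinearEquiv.coe_coe,
    DirectSum.decomposeLinearEquiv_apply]
  rw [DirectSum.decompose_of_mem 𝒜 ha, ← DirectSum.lof_eq_of ℂ, DirectSum.toModule_lof]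
  simp [hT p q a' ha']

/-- The kernel of the multiplication is a graded subspace of `A ⊗ A`. -/
lemma ker_le_span :
    LinearMap.ker (LinearMap.mul' ℂ A) ≤ Submodule.span ℂ
      {y : A ⊗[ℂ] A | y ∈ LinearMap.ker (LinearMap.mul' ℂ A) ∧ ∃ P, y ∈ tensorDeg 𝒜 P} := by
  -- `π x = x - m(x) ⊗ 1` fixes the kernel and sends homogeneous tensors to homogeneous elements.
  let π : A ⊗[ℂ] A →ₗ[ℂ] A ⊗[ℂ] A :=
    LinearMap.id - ((TensorProduct.mk ℂ A A).flip 1).comp (LinearMap.mul' ℂ A)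
  set N := Submodule.span ℂ
      {y : A ⊗[ℂ] A | y ∈ LinearMap.ker (LinearMap.mul' ℂ A) ∧ ∃ P, y ∈ tensorDeg 𝒜 P}
  have hπ : (⊤ : Submodule ℂ (A ⊗[ℂ] A)) ≤ N.comap π := by
    rw [← span_hom_tensor 𝒜, Submodule.span_le]
    rintro _ ⟨p, q, a, ha, a', ha', rfl⟩
    refine Submodule.subset_span ⟨by simp [π], p + q, ?_⟩
    have h1 : π (a ⊗ₜ[ℂ] a') = a ⊗ₜ[ℂ] a' - (a * a') ⊗ₜ[ℂ] 1 := by simp [π]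
    rw [h1]
    exact Submodule.sub_mem _
      (Submodule.subset_span ⟨p, q, a, ha, a', ha', rfl, rfl⟩)
      (Submodule.subset_span ⟨p + q, 0, a * a', SetLike.mul_mem_graded ha ha', 1,
        SetLike.one_mem_graded 𝒜, add_zero _, rfl⟩)
  intro x hx
  have h2 : π x = x := by
    have hx' : LinearMap.mul' ℂ A x = 0 := hx
    simp [π, hx']
  rw [← h2]
  exact hπ (x := x) trivial

/-- The cocycle identity relating the `R`-matrix phase to the phases of `⋆_θ` and `φ_θ`. -/
lemma phase_identity (θ : ℝ) (p p' u u' : ℤ × ℤ) :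
    rphase θ u p' * (phase θ p u * (phase θ p' u' * phase θ (p + u) (p' + u')))
      = phase θ (p + p') (u + u') * (phase θ p p' * phase θ u u') := by
  simp only [phase, rphase, ← Complex.exp_add]
  congr 1
  simp only [Prod.fst_add, Prod.snd_add]
  push_cast
  ring

variable {𝒜} in
/-- On homogeneous elements, `φ` turns the braided product into the ordinary one up to a phase. -/
lemma phi_bmul {θ : ℝ} {stp : A →ₗ[ℂ] A →ₗ[ℂ] A}
    (hstp : ∀ (p q : ℤ × ℤ), ∀ a ∈ 𝒜 p, ∀ a' ∈ 𝒜 q, stp a a' = phase θ p q • (a * a'))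
    {bmul : A ⊗[ℂ] A →ₗ[ℂ] A ⊗[ℂ] A →ₗ[ℂ] A ⊗[ℂ] A}
    (hbmul : ∀ (p p' u u' : ℤ × ℤ), ∀ a ∈ 𝒜 p, ∀ a' ∈ 𝒜 p', ∀ c ∈ 𝒜 u, ∀ c' ∈ 𝒜 u',
      bmul (a ⊗ₜ[ℂ] a') (c ⊗ₜ[ℂ] c')
        = rphase θ u p' • ((stp a c) ⊗ₜ[ℂ] (stp a' c')))
    {φ : A ⊗[ℂ] A →ₗ[ℂ] A ⊗[ℂ] A}
    (hφ : ∀ (p q : ℤ × ℤ), ∀ a ∈ 𝒜 p, ∀ a' ∈ 𝒜 q,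
      φ (a ⊗ₜ[ℂ] a') = phase θ p q • (a ⊗ₜ[ℂ] a'))
    {P Q : ℤ × ℤ} {x x' : A ⊗[ℂ] A} (hx : x ∈ tensorDeg 𝒜 P) (hx' : x' ∈ tensorDeg 𝒜 Q) :
    φ (bmul x x') = phase θ P Q • (φ x * φ x') := by
  induction hx using Submodule.span_induction with
  | zero => simp
  | add y z _ _ hy hz => simp only [map_add, LinearMap.add_apply, hy, hz, add_mul, smul_add]
  | smul r y _ hy =>
    rw [map_smul, LinearMap.smul_apply, map_smul, hy, map_smul, smul_mul_assoc, smul_comm]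
  | mem y hy =>
    obtain ⟨p, p', a, ha, a', ha', rfl, rfl⟩ := hy
    induction hx' using Submodule.span_induction with
    | zero => simp
    | add y z _ _ hy hz => simp only [map_add, hy, hz, mul_add, smul_add]
    | smul r y _ hy => rw [map_smul, map_smul, hy, map_smul, mul_smul_comm, smul_comm]
    | mem y hy =>
      obtain ⟨u, u', c, hc, c', hc', rfl, rfl⟩ := hy
      rw [hbmul p p' u u' a ha a' ha' c hc c' hc', hstp p u a ha c hc, hstp p' u' a' ha' c' hc',
        hφ p p' a ha a' ha', hφ u u' c hc c' hc']
      simp only [← TensorProduct.smul_tmul', TensorProduct.tmul_smul, map_smul]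
      rw [hφ (p + u) (p' + u') _ (SetLike.mul_mem_graded ha hc) _
        (SetLike.mul_mem_graded ha' hc')]
      simp only [smul_mul_assoc, mul_smul_comm, smul_smul, Algebra.TensorProduct.tmul_mul_tmul,
        ← TensorProduct.smul_tmul']
      congr 1
      linear_combination phase_identity θ p p' u u'

end PhaseMap

/-- the linear bijection `φ̄_θ : Ω¹(A_θ) → Ω¹(A)` restricts to a bijection
from the set `Con(A_θ,δ)` of connections on the deformed Hopf fibration onto the set
`Con(A,δ)` of connections on the classical Hopf fibration. -/
theorem phase_map_bijection_of_connections
    (A : Type) [CommRing A] [Algebra ℂ A]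
    (𝒜 : ℤ × ℤ → Submodule ℂ A) [GradedAlgebra 𝒜]
    (z1 z2 z1s z2s : A)
    (hz1 : z1 ∈ 𝒜 (1, 0)) (hz2 : z2 ∈ 𝒜 (0, 1))
    (hz1s : z1s ∈ 𝒜 (-1, 0)) (hz2s : z2s ∈ 𝒜 (0, -1))
    (hrel : z1s * z1 + z2s * z2 = 1)
    (huniv : ∀ (C : Type) [CommRing C] [Algebra ℂ C] (w1 w2 w1s w2s : C),
      w1s * w1 + w2s * w2 = 1 →
      ∃! f : A →ₐ[ℂ] C, f z1 = w1 ∧ f z2 = w2 ∧ f z1s = w1s ∧ f z2s = w2s)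
    (θ : ℝ)
    (stp : A →ₗ[ℂ] A →ₗ[ℂ] A)
    (hstp : ∀ (p q : ℤ × ℤ), ∀ a ∈ 𝒜 p, ∀ a' ∈ 𝒜 q, stp a a' = phase θ p q • (a * a'))
    (bmul : A ⊗[ℂ] A →ₗ[ℂ] A ⊗[ℂ] A →ₗ[ℂ] A ⊗[ℂ] A)
    (hbmul : ∀ (p p' u u' : ℤ × ℤ), ∀ a ∈ 𝒜 p, ∀ a' ∈ 𝒜 p', ∀ c ∈ 𝒜 u, ∀ c' ∈ 𝒜 u',
      bmul (a ⊗ₜ[ℂ] a') (c ⊗ₜ[ℂ] c')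
        = rphase θ u p' • ((stp a c) ⊗ₜ[ℂ] (stp a' c')))
    (Euler : A →ₗ[ℂ] A)
    (hEuler : ∀ (p : ℤ × ℤ), ∀ a ∈ 𝒜 p, Euler a = ((p.1 + p.2 : ℤ) : ℂ) • a)
    -- the cocycle phase map `φ_θ` on `A ⊗ A`
    (φ : A ⊗[ℂ] A →ₗ[ℂ] A ⊗[ℂ] A)
    (hφ : ∀ (p q : ℤ × ℤ), ∀ a ∈ 𝒜 p, ∀ a' ∈ 𝒜 q,
      φ (a ⊗ₜ[ℂ] a') = phase θ p q • (a ⊗ₜ[ℂ] a')) :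
    ∀ (K K2 Kθ K2θ : Submodule ℂ (A ⊗[ℂ] A))
      (vrep vθrep : A ⊗[ℂ] A →ₗ[ℂ] A),
      K = LinearMap.ker (LinearMap.mul' ℂ A) →
      K2 = K * K →
      Kθ = LinearMap.ker (TensorProduct.lift stp) →
      K2θ = Submodule.span ℂ {y : A ⊗[ℂ] A | ∃ x ∈ Kθ, ∃ x' ∈ Kθ, y = bmul x x'} →
      vrep = (LinearMap.mul' ℂ A).comp (TensorProduct.map LinearMap.id Euler) →
      vθrep = (TensorProduct.lift stp).comp (TensorProduct.map LinearMap.id Euler) →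
      -- for the induced map `φ̄_θ` on Kähler `1`-forms…
      ∀ (φbar : ((A ⊗[ℂ] A) ⧸ K2θ) →ₗ[ℂ] ((A ⊗[ℂ] A) ⧸ K2)),
        (∀ x : A ⊗[ℂ] A, φbar (K2θ.mkQ x) = K2.mkQ (φ x)) →
        -- …`φ̄_θ` maps `Con(A_θ,δ)` bijectively onto `Con(A,δ)`
        Set.BijOn φbar
          {w : (A ⊗[ℂ] A) ⧸ K2θ | ∃ x : A ⊗[ℂ] A,
            x ∈ Kθ ∧ x ∈ tensorTotalDeg 𝒜 0 ∧ vθrep x = 1 ∧ w = K2θ.mkQ x}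
          {w : (A ⊗[ℂ] A) ⧸ K2 | ∃ x : A ⊗[ℂ] A,
            x ∈ K ∧ x ∈ tensorTotalDeg 𝒜 0 ∧ vrep x = 1 ∧ w = K2.mkQ x} := by
  rintro K K2 Kθ K2θ vrep vθrep hK rfl hKθ hK2θ rfl rfl φbar hφbar
  obtain ⟨ψ, hψ⟩ := exists_diagonal 𝒜 (fun p q => (phase θ p q)⁻¹)
  have hφψ : φ.comp ψ = LinearMap.id := hom_tensor_ext 𝒜 _ _ fun p q a ha a' ha' => by
    simp [hψ p q a ha a' ha', hφ p q a ha a' ha', smul_smul, phase_ne_zero]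
  have hψφ : ψ.comp φ = LinearMap.id := hom_tensor_ext 𝒜 _ _ fun p q a ha a' ha' => by
    simp [hψ p q a ha a' ha', hφ p q a ha a' ha', smul_smul, phase_ne_zero]
  have hφψ' : ∀ x, φ (ψ x) = x := fun x => LinearMap.congr_fun hφψ x
  have hψφ' : ∀ x, ψ (φ x) = x := fun x => LinearMap.congr_fun hψφ x
  have hmul : TensorProduct.lift stp = (LinearMap.mul' ℂ A).comp φ :=
    hom_tensor_ext 𝒜 _ _ fun p q a ha a' ha' => by
      simp [hstp p q a ha a' ha', hφ p q a ha a' ha']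
  have hmul' : ∀ x, TensorProduct.lift stp x = LinearMap.mul' ℂ A (φ x) :=
    fun x => LinearMap.congr_fun hmul x
  have hv : (TensorProduct.lift stp).comp (TensorProduct.map LinearMap.id Euler)
      = ((LinearMap.mul' ℂ A).comp (TensorProduct.map LinearMap.id Euler)).comp φ :=
    hom_tensor_ext 𝒜 _ _ fun p q a ha a' ha' => by
      simp only [LinearMap.comp_apply, TensorProduct.map_tmul, LinearMap.id_apply,
        TensorProduct.lift.tmul, hφ p q a ha a' ha', map_smul, hEuler q a' ha',
        LinearMap.mul'_apply, hstp p q a ha a' ha', mul_smul_comm]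
      rw [smul_comm]
  have hv' : ∀ x, (TensorProduct.lift stp).comp (TensorProduct.map LinearMap.id Euler) x
      = (LinearMap.mul' ℂ A).comp (TensorProduct.map LinearMap.id Euler) (φ x) :=
    fun x => LinearMap.congr_fun hv x
  have hKmem : ∀ x, x ∈ Kθ ↔ φ x ∈ K := fun x => by
    rw [hKθ, hK, LinearMap.mem_ker, LinearMap.mem_ker, hmul']
  have hK2 : K * K ≤ K2θ.map φ := by
    have hspan : K ≤ Submodule.span ℂ {y | y ∈ K ∧ ∃ P, y ∈ tensorDeg 𝒜 P} := by
      rw [hK]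
      exact ker_le_span 𝒜
    refine (mul_le_mul' hspan hspan).trans ?_
    rw [Submodule.span_mul_span, Submodule.span_le]
    rintro _ ⟨y, ⟨hy, P, hyP⟩, y', ⟨hy', Q, hyQ⟩, rfl⟩
    have hb := phi_bmul hstp hbmul hφ (diagonal_mem_tensorDeg hψ P hyP)
      (diagonal_mem_tensorDeg hψ Q hyQ)
    rw [hφψ', hφψ'] at hb
    refine ⟨(phase θ P Q)⁻¹ • bmul (ψ y) (ψ y'), ?_, ?_⟩
    · rw [hK2θ]
      refine Submodule.smul_mem _ _ (Submodule.subset_span ⟨ψ y, ?_, ψ y', ?_, rfl⟩)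
      · rwa [hKmem, hφψ']
      · rwa [hKmem, hφψ']
    · rw [map_smul, hb, smul_smul, inv_mul_cancel₀ (phase_ne_zero θ P Q), one_smul]
  refine ⟨?_, ?_, ?_⟩
  · rintro _ ⟨x, hx, hdeg, hvx, rfl⟩
    exact ⟨φ x, (hKmem x).1 hx, diagonal_mem_tensorTotalDeg hφ 0 hdeg, (hv' x).symm.trans hvx,
      hφbar x⟩
  · refine Function.Injective.injOn ?_
    rw [← LinearMap.ker_eq_bot, LinearMap.ker_eq_bot']
    intro w hw
    obtain ⟨x, rfl⟩ := K2θ.mkQ_surjective w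
    rw [hφbar, Submodule.mkQ_apply, Submodule.Quotient.mk_eq_zero] at hw
    obtain ⟨x', hx', hxx'⟩ := hK2 hw
    rw [Submodule.mkQ_apply, Submodule.Quotient.mk_eq_zero, ← hψφ' x, ← hxx', hψφ']
    exact hx'
  · rintro _ ⟨y, hy, hdeg, hvy, rfl⟩
    refine ⟨K2θ.mkQ (ψ y), ⟨ψ y, ?_, diagonal_mem_tensorTotalDeg hψ 0 hdeg, ?_, rfl⟩, ?_⟩
    · rwa [hKmem, hφψ']
    · rw [hv', hφψ', hvy]
    · rw [hφbar, hφψ']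
end
end

section
/- The bijection φ̄_θ : Con(A_θ,δ) → Con(A,δ) satisfies φ̄_θ(ω⁰_θ) = ω⁰ and φ̄_θ(b d_θ b') = b db' for all b, b' ∈ B; hence it is given explicitly by ω⁰_θ + α ↦ ω⁰ + α, i.e., it preserves the base points ω⁰_θ and ω⁰ and its linear part is the identity map on Ω¹(B) = B dB. -/
/-!
The phase `e^{πiθ(m₁m₂' − m₂m₁')}` is the exponential of the determinant of the two degrees, so it is
trivial whenever the degrees are parallel. Two degrees of total degree `0` both lie on the line
spanned by `(1, -1)`; hence, by bilinearity, `⋆_θ` is the ordinary product on `B` and `φ_θ` is the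
identity on `B ⊗ B` (`eq_of_totalDeg_zero` carries the bilinear extension). The degrees of `zᵢ*` and
`zᵢ` are opposite, so the same happens for the two terms of `ω⁰_θ`. Thus the representatives of
`ω⁰_θ` and `b d_θ b'` coincide with those of `ω⁰` and `b db'`, and `φ_θ` fixes them.
-/

set_option synthInstance.maxHeartbeats 1000000
set_option maxHeartbeats 1000000

open scoped TensorProduct
noncomputable section

theorem phase_eq_one {θ : ℝ} {p q : ℤ × ℤ} (h : p.1 * q.2 - p.2 * q.1 = 0) :
    phase θ p q = 1 := by
  simp [phase, h]

/-- Two bilinear maps that differ by the phase on homogeneous elements agree on `B × B`. -/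
theorem eq_of_totalDeg_zero {A M : Type} [AddCommMonoid A] [Module ℂ A] [AddCommMonoid M]
    [Module ℂ M] {𝒜 : ℤ × ℤ → Submodule ℂ A} {θ : ℝ} (f g : A →ₗ[ℂ] A →ₗ[ℂ] M)
    (h : ∀ (p q : ℤ × ℤ), ∀ a ∈ 𝒜 p, ∀ a' ∈ 𝒜 q, f a a' = phase θ p q • g a a')
    {b b' : A} (hb : b ∈ totalDeg 𝒜 0) (hb' : b' ∈ totalDeg 𝒜 0) : f b b' = g b b' := by
  have key : ∀ p : ℤ × ℤ, p.1 + p.2 = 0 → ∀ a ∈ 𝒜 p, f a b' = g a b' := by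
    intro p hp a ha
    have hle : totalDeg 𝒜 0 ≤ LinearMap.eqLocus (f a) (g a) := by
      refine iSup₂_le fun q hq a' ha' => ?_
      have hph : p.1 * q.2 - p.2 * q.1 = 0 := by
        rw [eq_neg_of_add_eq_zero_left hp, eq_neg_of_add_eq_zero_left hq]
        ring
      simpa [phase_eq_one hph] using h p q a ha a' ha'
    exact hle hb'
  have hle : totalDeg 𝒜 0 ≤ LinearMap.eqLocus (f.flip b') (g.flip b') :=
    iSup₂_le fun p hp a ha => key p hp a ha
  exact hle hb

/-- the bijection `φ̄_θ : Con(A_θ,δ) → Con(A,δ)` satisfies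
`φ̄_θ(ω⁰_θ) = ω⁰` and `φ̄_θ(b d_θ b') = b db'` for all `b, b' ∈ B`; hence it is given
explicitly by `ω⁰_θ + α ↦ ω⁰ + α`: it preserves the base points and its linear part is
the identity on `Ω¹(B) = B dB`. -/
theorem phase_map_of_connections_explicit
    (A : Type) [CommRing A] [Algebra ℂ A]
    (𝒜 : ℤ × ℤ → Submodule ℂ A) [GradedAlgebra 𝒜]
    (z1 z2 z1s z2s : A)
    (hz1 : z1 ∈ 𝒜 (1, 0)) (hz2 : z2 ∈ 𝒜 (0, 1))
    (hz1s : z1s ∈ 𝒜 (-1, 0)) (hz2s : z2s ∈ 𝒜 (0, -1))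
    (hrel : z1s * z1 + z2s * z2 = 1)
    (huniv : ∀ (C : Type) [CommRing C] [Algebra ℂ C] (w1 w2 w1s w2s : C),
      w1s * w1 + w2s * w2 = 1 →
      ∃! f : A →ₐ[ℂ] C, f z1 = w1 ∧ f z2 = w2 ∧ f z1s = w1s ∧ f z2s = w2s)
    (θ : ℝ)
    (stp : A →ₗ[ℂ] A →ₗ[ℂ] A)
    (hstp : ∀ (p q : ℤ × ℤ), ∀ a ∈ 𝒜 p, ∀ a' ∈ 𝒜 q, stp a a' = phase θ p q • (a * a'))
    (bmul : A ⊗[ℂ] A →ₗ[ℂ] A ⊗[ℂ] A →ₗ[ℂ] A ⊗[ℂ] A)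
    (hbmul : ∀ (p p' u u' : ℤ × ℤ), ∀ a ∈ 𝒜 p, ∀ a' ∈ 𝒜 p', ∀ c ∈ 𝒜 u, ∀ c' ∈ 𝒜 u',
      bmul (a ⊗ₜ[ℂ] a') (c ⊗ₜ[ℂ] c')
        = rphase θ u p' • ((stp a c) ⊗ₜ[ℂ] (stp a' c')))
    -- the cocycle phase map `φ_θ` on `A ⊗ A`
    (φ : A ⊗[ℂ] A →ₗ[ℂ] A ⊗[ℂ] A)
    (hφ : ∀ (p q : ℤ × ℤ), ∀ a ∈ 𝒜 p, ∀ a' ∈ 𝒜 q,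
      φ (a ⊗ₜ[ℂ] a') = phase θ p q • (a ⊗ₜ[ℂ] a')) :
    ∀ (K K2 Kθ K2θ : Submodule ℂ (A ⊗[ℂ] A)) (ωrep ωθrep : A ⊗[ℂ] A)
      (BdB BdθB : Submodule ℂ (A ⊗[ℂ] A)),
      K = LinearMap.ker (LinearMap.mul' ℂ A) →
      K2 = K * K →
      Kθ = LinearMap.ker (TensorProduct.lift stp) →
      K2θ = Submodule.span ℂ {y : A ⊗[ℂ] A | ∃ x ∈ Kθ, ∃ x' ∈ Kθ, y = bmul x x'} →
      ωrep = z1s ⊗ₜ[ℂ] z1 - (z1s * z1) ⊗ₜ[ℂ] (1 : A)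
        + (z2s ⊗ₜ[ℂ] z2 - (z2s * z2) ⊗ₜ[ℂ] (1 : A)) →
      ωθrep = (stp z1s 1) ⊗ₜ[ℂ] z1 - (stp z1s z1) ⊗ₜ[ℂ] (1 : A)
        + ((stp z2s 1) ⊗ₜ[ℂ] z2 - (stp z2s z2) ⊗ₜ[ℂ] (1 : A)) →
      BdB = Submodule.span ℂ {y : A ⊗[ℂ] A | ∃ b ∈ totalDeg 𝒜 0, ∃ b' ∈ totalDeg 𝒜 0,
        y = b ⊗ₜ[ℂ] b' - (b * b') ⊗ₜ[ℂ] (1 : A)} →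
      BdθB = Submodule.span ℂ {y : A ⊗[ℂ] A | ∃ b ∈ totalDeg 𝒜 0, ∃ b' ∈ totalDeg 𝒜 0,
        y = (stp b 1) ⊗ₜ[ℂ] b' - (stp b b') ⊗ₜ[ℂ] (1 : A)} →
      ∀ (φbar : ((A ⊗[ℂ] A) ⧸ K2θ) →ₗ[ℂ] ((A ⊗[ℂ] A) ⧸ K2)),
        (∀ x : A ⊗[ℂ] A, φbar (K2θ.mkQ x) = K2.mkQ (φ x)) →
        -- `B d_θ B = B dB` as subspaces of representatives
        BdθB = BdB ∧
        -- `φ̄_θ` preserves the base points: `φ̄_θ(ω⁰_θ) = ω⁰`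
        φbar (K2θ.mkQ ωθrep) = K2.mkQ ωrep ∧
        -- `φ̄_θ(b d_θ b') = b db'` for all `b, b' ∈ B`
        (∀ b ∈ totalDeg 𝒜 0, ∀ b' ∈ totalDeg 𝒜 0,
          φbar (K2θ.mkQ ((stp b 1) ⊗ₜ[ℂ] b' - (stp b b') ⊗ₜ[ℂ] (1 : A)))
            = K2.mkQ (b ⊗ₜ[ℂ] b' - (b * b') ⊗ₜ[ℂ] (1 : A))) ∧
        -- hence `φ̄_θ` is explicitly given by `ω⁰_θ + α ↦ ω⁰ + α`
        (∀ x ∈ BdB, φbar (K2θ.mkQ (ωθrep + x)) = K2.mkQ (ωrep + x)) := by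
  intro K K2 Kθ K2θ ωrep ωθrep BdB BdθB _ _ _ _ hω hωθ hBdB hBdθB φbar hφbar
  have h1 : (1 : A) ∈ 𝒜 0 := SetLike.GradedOne.one_mem
  have hdeg : ∀ p : ℤ × ℤ, p.1 + p.2 = 0 → 𝒜 p ≤ totalDeg 𝒜 0 := fun p hp =>
    le_iSup₂_of_le (f := fun (p : ℤ × ℤ) (_ : p.1 + p.2 = 0) => 𝒜 p) p hp le_rfl
  have h1B : (1 : A) ∈ totalDeg 𝒜 0 := hdeg 0 (by simp) h1
  have stp_one : ∀ (p : ℤ × ℤ), ∀ a ∈ 𝒜 p, stp a 1 = a := fun p a ha => by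
    rw [hstp p 0 a ha 1 h1, phase_eq_one (by simp), one_smul, mul_one]
  have stpB : ∀ b ∈ totalDeg 𝒜 0, ∀ b' ∈ totalDeg 𝒜 0, stp b b' = b * b' :=
    fun b hb b' hb' => eq_of_totalDeg_zero stp (LinearMap.mul ℂ A) hstp hb hb'
  have φB : ∀ b ∈ totalDeg 𝒜 0, ∀ b' ∈ totalDeg 𝒜 0, φ (b ⊗ₜ[ℂ] b') = b ⊗ₜ[ℂ] b' :=
    fun b hb b' hb' => eq_of_totalDeg_zero ((TensorProduct.mk ℂ A A).compr₂ φ)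
      (TensorProduct.mk ℂ A A) hφ hb hb'
  have φ_mul_one : ∀ b ∈ totalDeg 𝒜 0, ∀ b' ∈ totalDeg 𝒜 0,
      φ ((b * b') ⊗ₜ[ℂ] (1 : A)) = (b * b') ⊗ₜ[ℂ] (1 : A) := by
    intro b hb b' hb'
    refine φB _ ?_ 1 h1B
    -- `B` is closed under multiplication, checked on homogeneous components.
    have hle : totalDeg 𝒜 0 ≤ (totalDeg 𝒜 0).comap (LinearMap.mulRight ℂ b') := by
      refine iSup₂_le fun p hp a ha => ?_
      have hle' : totalDeg 𝒜 0 ≤ (totalDeg 𝒜 0).comap (LinearMap.mulLeft ℂ a) := by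
        refine iSup₂_le fun q hq a' ha' => ?_
        refine hdeg (p + q) ?_ (SetLike.GradedMul.mul_mem ha ha')
        simp only [Prod.fst_add, Prod.snd_add]
        linarith
      exact hle' hb'
    exact hle hb
  have hgen : ∀ b ∈ totalDeg 𝒜 0, ∀ b' ∈ totalDeg 𝒜 0,
      (stp b 1) ⊗ₜ[ℂ] b' - (stp b b') ⊗ₜ[ℂ] (1 : A)
        = b ⊗ₜ[ℂ] b' - (b * b') ⊗ₜ[ℂ] (1 : A) := by
    intro b hb b' hb'
    rw [stpB b hb 1 h1B, stpB b hb b' hb', mul_one]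
  have φgen : ∀ b ∈ totalDeg 𝒜 0, ∀ b' ∈ totalDeg 𝒜 0,
      φ (b ⊗ₜ[ℂ] b' - (b * b') ⊗ₜ[ℂ] (1 : A)) = b ⊗ₜ[ℂ] b' - (b * b') ⊗ₜ[ℂ] (1 : A) := by
    intro b hb b' hb'
    rw [map_sub, φB b hb b' hb', φ_mul_one b hb b' hb']
  have hterm : ∀ (p q : ℤ × ℤ), p + q = 0 → ∀ a ∈ 𝒜 p, ∀ c ∈ 𝒜 q,
      φ ((stp a 1) ⊗ₜ[ℂ] c - (stp a c) ⊗ₜ[ℂ] (1 : A))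
        = a ⊗ₜ[ℂ] c - (a * c) ⊗ₜ[ℂ] (1 : A) := by
    intro p q hpq a ha c hc
    -- Opposite degrees have trivial phase; this covers the summands `zᵢ* dzᵢ` of `ω⁰`.
    have hph : phase θ p q = 1 := by
      refine phase_eq_one ?_
      rw [eq_neg_of_add_eq_zero_left hpq]
      simp only [Prod.fst_neg, Prod.snd_neg]
      ring
    have hac : a * c ∈ 𝒜 0 := hpq ▸ SetLike.GradedMul.mul_mem ha hc
    rw [stp_one p a ha, hstp p q a ha c hc, hph, one_smul, map_sub, hφ p q a ha c hc, hph,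
      one_smul, hφ 0 0 _ hac 1 h1, phase_eq_one (by simp), one_smul]
  have φω : φ ωθrep = ωrep := by
    rw [hωθ, hω, map_add, hterm (-1, 0) (1, 0) (by simp) z1s hz1s z1 hz1,
      hterm (0, -1) (0, 1) (by simp) z2s hz2s z2 hz2]
  have φfix : ∀ x ∈ BdB, φ x = x := by
    have hle : BdB ≤ LinearMap.eqLocus φ LinearMap.id := by
      rw [hBdB, Submodule.span_le]
      rintro _ ⟨b, hb, b', hb', rfl⟩
      exact φgen b hb b' hb'
    exact fun x hx => hle hx
  refine ⟨?_, ?_, ?_, ?_⟩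
  · rw [hBdB, hBdθB]
    congr 1
    ext y
    constructor
    · rintro ⟨b, hb, b', hb', rfl⟩
      exact ⟨b, hb, b', hb', hgen b hb b' hb'⟩
    · rintro ⟨b, hb, b', hb', rfl⟩
      exact ⟨b, hb, b', hb', (hgen b hb b' hb').symm⟩
  · rw [hφbar, φω]
  · intro b hb b' hb'
    rw [hφbar, hgen b hb b' hb', φgen b hb b' hb']
  · intro x hx
    rw [hφbar, map_add φ, φω, φfix x hx]
end
end

section
/- Suppose θ ∈ ℝ is irrational and the ℤ-graded vector space V has Vⁿ ≠ 0 for some n ≠ 0 (i.e., the O(U(1))-coaction on V is non-trivial). Then the left B-module isomorphism L_V : E_A(V) → E_{A_θ}(V) does not intertwine the actions of infinitesimal gauge transformations: there exist b ∈ B and ξ ∈ E_A(V) such that L_V(ξ ◁ (b⊗X)) ≠ L_V(ξ) ◁_θ (b⊗X). -/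
/-!
For `a` of degree `(n, 0)`, `v ∈ Vⁿ` and `b = z₁ z₂*` of degree `(1, -1)`, both sides applied to
`a ⊗ v` are multiples of `n (a b) ⊗ v`: the left one by `e^{πiθn}` (the phase of `L` on the product),
the right one by `e^{-πiθn}` (the phase of the star product). They agree only if `e^{2πiθn} = 1`, that
is, if `θn` is an integer, which irrationality of `θ` excludes for `n ≠ 0`. With `a` a power of `z₁` or
of `z₁*`, the vector `(a b) ⊗ v` is nonzero, since the universal property gives a character of `A`
whose value at each generator is nonzero.
-/

set_option synthInstance.maxHeartbeats 1000000
set_option maxHeartbeats 1000000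

open scoped TensorProduct
noncomputable section

/-- The phase factor `e^{πiθmn}`. -/
def lphase (θ : ℝ) (m n : ℤ) : ℂ :=
  Complex.exp (Complex.I * ((Real.pi * θ : ℝ) : ℂ) * ((m * n : ℤ) : ℂ))

/-- The vector space underlying the associated module `E_A(V) = ⊕ₙ A⁽ⁿ⁾ ⊗ Vⁿ`. -/
def assocModule {A : Type} [CommRing A] [Algebra ℂ A]
    (𝒜 : ℤ × ℤ → Submodule ℂ A)
    {V : Type} [AddCommGroup V] [Module ℂ V] (𝒱 : ℤ → Submodule ℂ V) :
    Submodule ℂ (A ⊗[ℂ] V) :=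
  Submodule.span ℂ
    {x : A ⊗[ℂ] V | ∃ (m n : ℤ) (a : A) (v : V),
      a ∈ 𝒜 (m + n, -m) ∧ v ∈ 𝒱 n ∧ x = a ⊗ₜ[ℂ] v}

/-- The two phases `e^{πiθn}` and `e^{-πiθn}` differ, as `θn` is not an integer. -/
lemma lphase_ne_phase {θ : ℝ} (hθ : Irrational θ) {n : ℤ} (hn : n ≠ 0) :
    lphase θ 1 n ≠ phase θ (n, 0) (1, -1) := by
  intro h
  unfold lphase phase at h
  rw [Complex.exp_eq_exp_iff_exists_int] at h
  obtain ⟨k, hk⟩ := h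
  have hpi : (Real.pi : ℂ) ≠ 0 := by exact_mod_cast Real.pi_ne_zero
  have h2 : (2 * Real.pi * Complex.I : ℂ) ≠ 0 := by simp [hpi]
  have h1 : ((θ * n : ℝ) : ℂ) = ((k : ℝ) : ℂ) := by
    apply mul_left_cancel₀ h2
    push_cast at hk ⊢
    linear_combination hk
  have h3 : θ * n = (k : ℝ) := by exact_mod_cast h1
  exact (hθ.mul_intCast hn).ne_int k h3

/-- Every degree `(n, 0)` contains an element outside the kernel of a character that is nonzero on
`z₁` and `z₁*`, namely a power of one of them. -/
lemma exists_mem_deg_map_ne_zero {A : Type} [CommRing A] [Algebra ℂ A]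
    (𝒜 : ℤ × ℤ → Submodule ℂ A) [GradedAlgebra 𝒜] {z1 z1s : A}
    (hz1 : z1 ∈ 𝒜 (1, 0)) (hz1s : z1s ∈ 𝒜 (-1, 0))
    (f : A →ₐ[ℂ] ℂ) (h1 : f z1 ≠ 0) (h1s : f z1s ≠ 0) (n : ℤ) :
    ∃ a ∈ 𝒜 (n, 0), f a ≠ 0 := by
  obtain ⟨k, rfl | rfl⟩ := n.eq_nat_or_neg
  · refine ⟨z1 ^ k, ?_, by simp [h1]⟩
    simpa using SetLike.pow_mem_graded k hz1
  · refine ⟨z1s ^ k, ?_, by simp [h1s]⟩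
    simpa using SetLike.pow_mem_graded k hz1s

/-- if `θ` is irrational and the `O(U(1))`-coaction on `V` is non-trivial
(`Vⁿ ≠ 0` for some `n ≠ 0`), then the left `B`-module isomorphism
`L_V : E_A(V) → E_{A_θ}(V)` does not intertwine the actions of infinitesimal gauge
transformations: there are `b ∈ B` and `ξ ∈ E_A(V)` with
`L_V(ξ ◁ (b⊗X)) ≠ L_V(ξ) ◁_θ (b⊗X)`. -/
theorem gauge_actions_not_intertwined
    (A : Type) [CommRing A] [Algebra ℂ A]
    (𝒜 : ℤ × ℤ → Submodule ℂ A) [GradedAlgebra 𝒜]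
    (z1 z2 z1s z2s : A)
    (hz1 : z1 ∈ 𝒜 (1, 0)) (hz2 : z2 ∈ 𝒜 (0, 1))
    (hz1s : z1s ∈ 𝒜 (-1, 0)) (hz2s : z2s ∈ 𝒜 (0, -1))
    (hrel : z1s * z1 + z2s * z2 = 1)
    (huniv : ∀ (C : Type) [CommRing C] [Algebra ℂ C] (w1 w2 w1s w2s : C),
      w1s * w1 + w2s * w2 = 1 →
      ∃! f : A →ₐ[ℂ] C, f z1 = w1 ∧ f z2 = w2 ∧ f z1s = w1s ∧ f z2s = w2s)
    (θ : ℝ) (hθ : Irrational θ)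
    (stp : A →ₗ[ℂ] A →ₗ[ℂ] A)
    (hstp : ∀ (p q : ℤ × ℤ), ∀ a ∈ 𝒜 p, ∀ a' ∈ 𝒜 q, stp a a' = phase θ p q • (a * a'))
    (V : Type) [AddCommGroup V] [Module ℂ V]
    (𝒱 : ℤ → Submodule ℂ V) [DirectSum.Decomposition 𝒱]
    (hV : ∃ n : ℤ, n ≠ 0 ∧ 𝒱 n ≠ ⊥)
    -- the Euler operator of `V`, multiplying `Vⁿ` by `n` (implementing `X(tⁿ) = n`)
    (N : V →ₗ[ℂ] V)
    (hN : ∀ (n : ℤ), ∀ v ∈ 𝒱 n, N v = (n : ℂ) • v)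
    -- the natural isomorphism `L_V`
    (L : A ⊗[ℂ] V →ₗ[ℂ] A ⊗[ℂ] V)
    (hL : ∀ (m n : ℤ) (a : A) (v : V), a ∈ 𝒜 (m + n, -m) → v ∈ 𝒱 n →
      L (a ⊗ₜ[ℂ] v) = lphase θ m n • (a ⊗ₜ[ℂ] v)) :
    ∃ b ∈ totalDeg 𝒜 0, ∃ ξ ∈ assocModule 𝒜 𝒱,
      L (TensorProduct.map (LinearMap.mulRight ℂ b) N ξ)
        ≠ TensorProduct.map (stp.flip b) N (L ξ) := by
  obtain ⟨n, hn, hVn⟩ := hV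
  obtain ⟨v, hv, hv0⟩ := Submodule.exists_mem_ne_zero_of_ne_bot hVn
  obtain ⟨f, ⟨f1, f2, f1s, f2s⟩, -⟩ := huniv ℂ 1 1 (1 / 2) (1 / 2) (by norm_num)
  obtain ⟨a, ha, hfa⟩ := exists_mem_deg_map_ne_zero 𝒜 hz1 hz1s f
    (by simp [f1]) (by simp [f1s]) n
  have hb : z1 * z2s ∈ 𝒜 (1, -1) := by simpa using SetLike.mul_mem_graded hz1 hz2s
  have hfb : f (z1 * z2s) ≠ 0 := by simp [f1, f2s]
  generalize z1 * z2s = b at hb hfb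
  have ha' : a ∈ 𝒜 (0 + n, -0) := by simpa using ha
  have hab : a * b ∈ 𝒜 (1 + n, -1) := by
    simpa [add_comm] using SetLike.mul_mem_graded ha hb
  refine ⟨b, Submodule.mem_iSup_of_mem (1, -1) (Submodule.mem_iSup_of_mem (by simp) hb),
    a ⊗ₜ[ℂ] v, Submodule.subset_span ⟨0, n, a, v, ha', hv, rfl⟩, fun h => ?_⟩
  rw [hL 0 n a v ha' hv, map_smul, TensorProduct.map_tmul, TensorProduct.map_tmul, hN n v hv,
    LinearMap.mulRight_apply, LinearMap.flip_apply, hstp _ _ a ha b hb,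
    hL 1 n _ _ hab (Submodule.smul_mem _ _ hv)] at h
  -- Contract the `A` factor with the character `f`.
  have h' := congrArg (fun x => TensorProduct.lid ℂ V (TensorProduct.map f.toLinearMap .id x)) h
  have h0 : lphase θ 0 n = 1 := by simp [lphase]
  have hn' : (n : ℂ) ≠ 0 := by exact_mod_cast hn
  simp only [h0, one_smul, map_smul, TensorProduct.map_tmul, TensorProduct.lid_tmul,
    AlgHom.toLinearMap_apply, map_mul, LinearMap.id_apply, smul_smul, smul_eq_mul] at h'
  have h'' := smul_left_injective ℂ hv0 h'
  apply lphase_ne_phase hθ hn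
  apply mul_right_cancel₀ (mul_ne_zero (mul_ne_zero hfa hfb) hn')
  linear_combination h''
end
end
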